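/- arXiv:0805.1996 — 4 statements merged into one kernel-verified Lean document; each statement's English description precedes it below -/
import Mathlib

section
/- Let n ≥ 2, let 0 < α ≤ ∞, and let f : [0,α) → ℝ be continuous with f(0) ≤ 0. If f is matrix convex of order n on [0,α), then the function g(t) = f(t)/t is matrix monotone of order n−1 on (0,α). -/
/-!
A positive increment `B - A` is a sum of rank-one matrices `v vᴴ`, and the partial sums `A + ∑ v vᴴ`
lie between `A` and `B`, so it suffices to treat `B = A + v vᴴ`.

In that case put `c = B^(-1/2) A^(1/2)` and `d = B^(-1/2) v`, so that `c cᴴ + d dᴴ = 1` and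
`cᴴ B c = A`. The defect of the contraction `c` has rank one, so one extra dimension suffices to
dilate `c` to the coisometries `R = (c, d)` and `R' = (c, -d)`. Since `f 0 ≤ 0`, each of them
satisfies `f (Rᴴ B R) ≤ Rᴴ f(B) R`. Averaging over the two signs erases the off-diagonal blocks and
leaves `cᴴ B c` and `cᴴ f(B) c` in the upper left corner, so convexity gives
`f(A) ≤ cᴴ f(B) c = A^(1/2) (f(B) B⁻¹) A^(1/2)`, and hence `f(A) A⁻¹ ≤ f(B) B⁻¹`.
-/

open Matrix Set MeasureTheory
open scoped ComplexOrder

/-- `f` is matrix monotone of order `n` on the set `I ⊆ ℝ`: for all `n × n` Hermitian complex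
matrices `A, B` with spectra contained in `I`, `A ≤ B` in the Loewner order (i.e. `B - A` is
positive semidefinite) implies `f(A) ≤ f(B)`, where `f(A)` is given by the continuous functional
calculus (applying `f` to the eigenvalues in a spectral decomposition). -/
def MatrixMonotoneOn (n : ℕ) (f : ℝ → ℝ) (I : Set ℝ) : Prop :=
  ∀ A B : Matrix (Fin n) (Fin n) ℂ, A.IsHermitian → B.IsHermitian →
    spectrum ℝ A ⊆ I → spectrum ℝ B ⊆ I → (B - A).PosSemidef →
    (cfc f B - cfc f A).PosSemidef

/-- `f` is matrix convex of order `n` on the set `I ⊆ ℝ`: for all `n × n` Hermitian complex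
matrices `A, B` with spectra contained in `I` and all `l ∈ [0,1]`,
`f(l•A + (1-l)•B) ≤ l•f(A) + (1-l)•f(B)` in the Loewner order. -/
def MatrixConvexOn (n : ℕ) (f : ℝ → ℝ) (I : Set ℝ) : Prop :=
  ∀ A B : Matrix (Fin n) (Fin n) ℂ, A.IsHermitian → B.IsHermitian →
    spectrum ℝ A ⊆ I → spectrum ℝ B ⊆ I → ∀ l : ℝ, 0 ≤ l → l ≤ 1 →
    (l • cfc f A + (1 - l) • cfc f B - cfc f (l • A + (1 - l) • B)).PosSemidef

open scoped MatrixOrder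

section SpectrumOrder

variable {R : Type*} [Ring R] [StarRing R] [TopologicalSpace R] [Algebra ℝ R] [PartialOrder R]
  [StarOrderedRing R] [ContinuousFunctionalCalculus ℝ R IsSelfAdjoint] [NonnegSpectrumClass ℝ R]
  {a b x : R}

lemma exists_mem_spectrum_le_of_le (ha : IsSelfAdjoint a) (hx : IsSelfAdjoint x) (hax : a ≤ x)
    {t : ℝ} (ht : t ∈ spectrum ℝ x) : ∃ s ∈ spectrum ℝ a, s ≤ t := by
  have : Nontrivial R := not_subsingleton_iff_nontrivial.1 fun _ => by
    simp [spectrum.of_subsingleton] at ht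
  obtain ⟨s, hs, hmin⟩ :=
    (ContinuousFunctionalCalculus.isCompact_spectrum (R := ℝ) a).exists_isLeast
      (ContinuousFunctionalCalculus.spectrum_nonempty a ha)
  exact ⟨s, hs, (algebraMap_le_iff_le_spectrum hx).1
    ((algebraMap_le_of_le_spectrum hmin ha).trans hax) t ht⟩

lemma exists_mem_spectrum_ge_of_le (hx : IsSelfAdjoint x) (hb : IsSelfAdjoint b) (hxb : x ≤ b)
    {t : ℝ} (ht : t ∈ spectrum ℝ x) : ∃ s ∈ spectrum ℝ b, t ≤ s := by
  have : Nontrivial R := not_subsingleton_iff_nontrivial.1 fun _ => by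
    simp [spectrum.of_subsingleton] at ht
  obtain ⟨s, hs, hmax⟩ :=
    (ContinuousFunctionalCalculus.isCompact_spectrum (R := ℝ) b).exists_isGreatest
      (ContinuousFunctionalCalculus.spectrum_nonempty b hb)
  exact ⟨s, hs, (le_algebraMap_iff_spectrum_le hx).1
    (hxb.trans (le_algebraMap_of_spectrum_le hmax hb)) t ht⟩

lemma spectrum_subset_of_ordConnected {S : Set ℝ} (hS : S.OrdConnected) (ha : IsSelfAdjoint a)
    (hx : IsSelfAdjoint x) (hb : IsSelfAdjoint b) (hax : a ≤ x) (hxb : x ≤ b)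
    (haS : spectrum ℝ a ⊆ S) (hbS : spectrum ℝ b ⊆ S) : spectrum ℝ x ⊆ S := by
  intro t ht
  obtain ⟨r, hr, hrt⟩ := exists_mem_spectrum_le_of_le ha hx hax ht
  obtain ⟨s, hs, hts⟩ := exists_mem_spectrum_ge_of_le hx hb hxb ht
  exact hS.out (haS hr) (hbS hs) ⟨hrt, hts⟩

end SpectrumOrder

section FunctionalCalculus

variable {𝕜 : Type*} [RCLike 𝕜] {ι κ : Type*} [Fintype ι] [DecidableEq ι] [Fintype κ]
  [DecidableEq κ]

lemma aeval_mul_eq_mul_aeval {R S : Type*} [CommSemiring R] [CommSemiring S] [Algebra R S]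
    {X : Matrix ι ι S} {Y : Matrix κ κ S} {T : Matrix ι κ S} (h : X * T = T * Y)
    (p : Polynomial R) : Polynomial.aeval X p * T = T * Polynomial.aeval Y p := by
  induction p using Polynomial.induction_on' with
  | add p q hp hq => rw [map_add, map_add, Matrix.add_mul, Matrix.mul_add, hp, hq]
  | monomial k r =>
    have hpow : X ^ k * T = T * Y ^ k := by
      induction k with
      | zero => simp
      | succ k ih =>
        rw [pow_succ, pow_succ', Matrix.mul_assoc, h, ← Matrix.mul_assoc, ih, Matrix.mul_assoc,
          ← pow_succ, ← pow_succ']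
    simp only [Polynomial.aeval_monomial, ← Algebra.smul_def, Matrix.smul_mul, Matrix.mul_smul,
      hpow]

-- On the finite set of all eigenvalues involved, `f` agrees with a polynomial.
lemma cfc_mul_eq_mul_cfc (f : ℝ → ℝ) {X : Matrix ι ι 𝕜} {Y : Matrix κ κ 𝕜} (hX : X.IsHermitian)
    (hY : Y.IsHermitian) {T : Matrix ι κ 𝕜} (h : X * T = T * Y) :
    cfc f X * T = T * cfc f Y := by
  have hfin : (spectrum ℝ X ∪ spectrum ℝ Y).Finite :=
    X.finite_real_spectrum.union Y.finite_real_spectrum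
  let p : Polynomial ℝ := Lagrange.interpolate hfin.toFinset id f
  have hp : ∀ x ∈ spectrum ℝ X ∪ spectrum ℝ Y, f x = p.eval x := fun x hx =>
    (Lagrange.eval_interpolate_at_node (v := id) f Function.injective_id.injOn
      (hfin.mem_toFinset.2 hx)).symm
  have hXp : cfc f X = Polynomial.aeval X p := by
    rw [← cfc_polynomial p X hX]
    exact cfc_congr fun x hx => hp x (Or.inl hx)
  have hYp : cfc f Y = Polynomial.aeval Y p := by
    rw [← cfc_polynomial p Y hY]
    exact cfc_congr fun x hx => hp x (Or.inr hx)
  rw [hXp, hYp, aeval_mul_eq_mul_aeval h]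

lemma cfc_submatrix_equiv (f : ℝ → ℝ) {X : Matrix ι ι 𝕜} (hX : X.IsHermitian) (e : κ ≃ ι) :
    cfc f (X.submatrix e e) = (cfc f X).submatrix e e := by
  let P : Matrix κ ι 𝕜 := (1 : Matrix ι ι 𝕜).submatrix e id
  have hP (M : Matrix ι ι 𝕜) : P * M = M.submatrix e id :=
    Matrix.one_submatrix_mul e (Equiv.refl ι) M
  have hsub (M : Matrix κ κ 𝕜) : M * P = M.submatrix id e.symm := by
    ext i j
    simp [P, Matrix.mul_apply, Matrix.one_apply, ← Equiv.eq_symm_apply]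
  have hint : X.submatrix e e * P = P * X := by simp [hP, hsub]
  have h := cfc_mul_eq_mul_cfc f (hX.submatrix e) hX hint
  rw [hP, hsub] at h
  simpa using congrArg (submatrix · id e) h

lemma toBlocks₁₁_cfc_fromBlocks (f : ℝ → ℝ) {X : Matrix ι ι 𝕜} {Y : Matrix κ κ 𝕜}
    (hX : X.IsHermitian) (hY : Y.IsHermitian) :
    (cfc f (fromBlocks X 0 0 Y)).toBlocks₁₁ = cfc f X := by
  let J : Matrix (ι ⊕ κ) ι 𝕜 := fromRows 1 0
  have hint : fromBlocks X 0 0 Y * J = J * X := by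
    simp [J, fromBlocks_mul_fromRows, fromRows_mul]
  have h := cfc_mul_eq_mul_cfc f (hX.fromBlocks (by simp) hY) hX hint
  rw [← fromBlocks_toBlocks (cfc f (fromBlocks X 0 0 Y)), fromBlocks_mul_fromRows,
    fromRows_mul] at h
  simpa using (fromRows_inj h).1

end FunctionalCalculus

section Coisometry

variable {𝕜 : Type*} [RCLike 𝕜] {ι κ : Type*} [Fintype ι] [Fintype κ] [DecidableEq κ]
  {B : Matrix κ κ 𝕜} {R : Matrix κ ι 𝕜}

lemma isStarProjection_conjTranspose_mul_self (hR : R * Rᴴ = 1) : IsStarProjection (Rᴴ * R) where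
  isIdempotentElem := by
    rw [IsIdempotentElem, Matrix.mul_assoc, ← Matrix.mul_assoc R, hR, Matrix.one_mul]
  isSelfAdjoint := Matrix.isHermitian_conjTranspose_mul_self R

variable [DecidableEq ι]

lemma mul_one_sub_conjTranspose_mul_self (hR : R * Rᴴ = 1) : R * (1 - Rᴴ * R) = 0 := by
  rw [Matrix.mul_sub, Matrix.mul_one, ← Matrix.mul_assoc, hR, Matrix.one_mul, sub_self]

-- The two summands are the values on the range of `Rᴴ` and on its orthogonal complement.
lemma cfc_conjTranspose_mul_mul_of_coisometry (f : ℝ → ℝ) (hB : B.IsHermitian) (hR : R * Rᴴ = 1) :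
    cfc f (Rᴴ * B * R) = Rᴴ * cfc f B * R + f 0 • (1 - Rᴴ * R) := by
  have hX : (Rᴴ * B * R).IsHermitian := Matrix.isHermitian_conjTranspose_mul_mul R hB
  have hrange : cfc f (Rᴴ * B * R) * Rᴴ = Rᴴ * cfc f B :=
    cfc_mul_eq_mul_cfc f hX hB (by rw [Matrix.mul_assoc _ R, hR, Matrix.mul_one])
  have hker : cfc f (Rᴴ * B * R) * (1 - Rᴴ * R) = f 0 • (1 - Rᴴ * R) := by
    have hint : Rᴴ * B * R * (1 - Rᴴ * R) = (1 - Rᴴ * R) * (0 : Matrix ι ι 𝕜) := by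
      rw [Matrix.mul_assoc, mul_one_sub_conjTranspose_mul_self hR, Matrix.mul_zero,
        Matrix.mul_zero]
    rw [cfc_mul_eq_mul_cfc f hX Matrix.isHermitian_zero hint, cfc_apply_zero,
      Algebra.algebraMap_eq_smul_one, Matrix.mul_smul, Matrix.mul_one]
  rw [← hker, ← hrange, Matrix.mul_assoc (cfc f _), ← Matrix.mul_add, add_sub_cancel,
    Matrix.mul_one]

lemma cfc_conjTranspose_mul_mul_le_of_coisometry {f : ℝ → ℝ} (hf0 : f 0 ≤ 0) (hB : B.IsHermitian)
    (hR : R * Rᴴ = 1) : cfc f (Rᴴ * B * R) ≤ Rᴴ * cfc f B * R := by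
  rw [cfc_conjTranspose_mul_mul_of_coisometry f hB hR]
  exact add_le_of_nonpos_right <|
    smul_nonpos_of_nonpos_of_nonneg hf0 (isStarProjection_conjTranspose_mul_self hR).one_sub.nonneg

-- A resolvent `U` of `B` at `t ≠ 0` yields the resolvent `Rᴴ U R + t⁻¹ (1 - Rᴴ R)` of `Rᴴ B R`.
lemma spectrum_conjTranspose_mul_mul_subset_of_coisometry (hR : R * Rᴴ = 1) :
    spectrum ℝ (Rᴴ * B * R) ⊆ insert 0 (spectrum ℝ B) := by
  intro t ht
  by_contra hmem
  obtain ⟨ht0, htB⟩ := not_or.1 hmem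
  obtain ⟨U, hU⟩ := (spectrum.notMem_iff.1 htB).exists_right_inv
  simp only [Algebra.algebraMap_eq_smul_one] at hU
  refine spectrum.notMem_iff.2 (IsUnit.of_mul_eq_one (Rᴴ * U * R + t⁻¹ • (1 - Rᴴ * R)) ?_) ht
  rw [Algebra.algebraMap_eq_smul_one]
  have hrange : (t • (1 : Matrix ι ι 𝕜) - Rᴴ * B * R) * Rᴴ =
      Rᴴ * (t • (1 : Matrix κ κ 𝕜) - B) := by
    rw [Matrix.sub_mul, Matrix.mul_assoc _ R, hR, Matrix.mul_sub]
    simp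
  have hker : (t • (1 : Matrix ι ι 𝕜) - Rᴴ * B * R) * (1 - Rᴴ * R) = t • (1 - Rᴴ * R) := by
    rw [Matrix.sub_mul, Matrix.mul_assoc _ R, mul_one_sub_conjTranspose_mul_self hR,
      Matrix.mul_zero, sub_zero, Matrix.smul_mul, Matrix.one_mul]
  rw [Matrix.mul_add, ← Matrix.mul_assoc, ← Matrix.mul_assoc, hrange, Matrix.mul_assoc Rᴴ, hU,
    Matrix.mul_one, Matrix.mul_smul, hker, inv_smul_smul₀ ht0, add_sub_cancel]

end Coisometry

section RankOneSteps

variable {𝕜 : Type*} [RCLike 𝕜] {ι : Type*} [Finite ι]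

lemma map_le_map_of_rankOne_steps {β : Type*} [Preorder β] {F : Matrix ι ι 𝕜 → β}
    {A B : Matrix ι ι 𝕜} (hAB : A ≤ B)
    (hF : ∀ X ∈ Icc A B, ∀ v : Matrix ι Unit 𝕜, X + v * vᴴ ∈ Icc A B → F X ≤ F (X + v * vᴴ)) :
    F A ≤ F B := by
  obtain ⟨k, v, hv⟩ := Matrix.posSemidef_iff_eq_sum_vecMulVec.1 (Matrix.le_iff.1 hAB)
  have hvpos (i : Fin k) : 0 ≤ vecMulVec (v i) (star (v i)) :=
    (Matrix.posSemidef_vecMulVec_self_star _).nonneg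
  have hmem (s : Finset (Fin k)) : A + ∑ i ∈ s, vecMulVec (v i) (star (v i)) ∈ Icc A B := by
    refine ⟨le_add_of_nonneg_right (Finset.sum_nonneg fun i _ => hvpos i), ?_⟩
    rw [← le_sub_iff_add_le', hv]
    exact Finset.sum_le_univ_sum_of_nonneg hvpos
  have hpartial (s : Finset (Fin k)) : F A ≤ F (A + ∑ i ∈ s, vecMulVec (v i) (star (v i))) := by
    induction s using Finset.induction_on with
    | empty => simp
    | insert i s his ih =>
      have hinsert : A + ∑ j ∈ insert i s, vecMulVec (v j) (star (v j)) =
          A + ∑ j ∈ s, vecMulVec (v j) (star (v j)) +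
            replicateCol Unit (v i) * (replicateCol Unit (v i))ᴴ := by
        rw [Finset.sum_insert his, vecMulVec_eq Unit, conjTranspose_replicateCol]
        abel
      have := hmem (insert i s)
      rw [hinsert] at this ⊢
      exact ih.trans (hF _ (hmem s) _ this)
  simpa only [← hv, add_sub_cancel] using hpartial Finset.univ

end RankOneSteps

section SquareRoot

variable {𝕜 : Type*} [RCLike 𝕜] {ι : Type*} [Fintype ι] [DecidableEq ι] {A : Matrix ι ι 𝕜}

lemma cfc_sqrt_mul_cfc_mul_cfc_sqrt (hA : A.PosSemidef) (h : ℝ → ℝ) :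
    cfc Real.sqrt A * cfc h A * cfc Real.sqrt A = cfc (fun t => t * h t) A := by
  have hcont (g : ℝ → ℝ) : ContinuousOn g (spectrum ℝ A) := A.finite_real_spectrum.continuousOn g
  rw [← cfc_mul _ _ A (hcont _) (hcont _), ← cfc_mul _ _ A (hcont _) (hcont _)]
  refine cfc_congr fun t ht => ?_
  have ht0 : 0 ≤ t := spectrum_nonneg_of_nonneg hA.nonneg ht
  rw [mul_right_comm, Real.mul_self_sqrt ht0]

lemma cfc_sqrt_mul_self (hA : A.PosSemidef) : cfc Real.sqrt A * cfc Real.sqrt A = A := by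
  have h := cfc_sqrt_mul_cfc_mul_cfc_sqrt hA fun _ => 1
  simpa only [cfc_const_one ℝ A, mul_one, cfc_id' ℝ A hA.isHermitian.isSelfAdjoint] using h

lemma cfc_sqrt_mul_cfc_div_mul_cfc_sqrt (hA : A.PosDef) (f : ℝ → ℝ) :
    cfc Real.sqrt A * cfc (fun t => f t / t) A * cfc Real.sqrt A = cfc f A := by
  rw [cfc_sqrt_mul_cfc_mul_cfc_sqrt hA.posSemidef]
  exact cfc_congr fun t ht => mul_div_cancel₀ (f t) (hA.isStrictlyPositive.spectrum_pos ht).ne'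

lemma isUnit_cfc_sqrt (hA : A.PosDef) : IsUnit (cfc Real.sqrt A) :=
  isUnit_cfc _ A (A.finite_real_spectrum.continuousOn _) hA.isHermitian fun _ ht =>
    (Real.sqrt_pos.2 (hA.isStrictlyPositive.spectrum_pos ht)).ne'

end SquareRoot

section Blocks

variable {ι κ ρ : Type*} [Fintype κ]

lemma conjTranspose_fromCols_mul_mul_fromCols {S : Type*} [Semiring S] [StarRing S]
    (M : Matrix κ κ S) (c : Matrix κ ι S) (d : Matrix κ ρ S) :
    (fromCols c d)ᴴ * M * fromCols c d =
      fromBlocks (cᴴ * M * c) (cᴴ * M * d) (dᴴ * M * c) (dᴴ * M * d) := by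
  rw [conjTranspose_fromCols_eq_fromRows_conjTranspose, fromRows_mul, fromRows_mul_fromCols]

lemma half_conj_fromCols_add_half_conj_fromCols_neg {S : Type*} [Ring S] [StarRing S] [Module ℝ S]
    (M : Matrix κ κ S) (c : Matrix κ ι S) (d : Matrix κ ρ S) :
    (1 / 2 : ℝ) • ((fromCols c d)ᴴ * M * fromCols c d) +
      (1 / 2 : ℝ) • ((fromCols c (-d))ᴴ * M * fromCols c (-d)) =
    fromBlocks (cᴴ * M * c) 0 0 (dᴴ * M * d) := by
  simp only [conjTranspose_fromCols_mul_mul_fromCols, fromBlocks_smul, fromBlocks_add,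
    conjTranspose_neg, Matrix.neg_mul, Matrix.mul_neg, neg_neg, smul_neg, add_neg_cancel,
    ← add_smul, add_halves, one_smul]

end Blocks

namespace MatrixConvexOn

variable {f : ℝ → ℝ} {I : Set ℝ} {ι κ ρ : Type*} [Fintype ι] [DecidableEq ι] [Fintype κ]
  [DecidableEq κ] [Fintype ρ]

lemma cfc_add_le (hf : MatrixConvexOn (Fintype.card ι) f I) {A B : Matrix ι ι ℂ}
    (hA : A.IsHermitian) (hB : B.IsHermitian) (hAI : spectrum ℝ A ⊆ I) (hBI : spectrum ℝ B ⊆ I)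
    {s t : ℝ} (hs : 0 ≤ s) (ht : 0 ≤ t) (hst : s + t = 1) :
    cfc f (s • A + t • B) ≤ s • cfc f A + t • cfc f B := by
  obtain rfl : t = 1 - s := eq_sub_of_add_eq' hst
  let e := (Fintype.equivFin ι).symm
  have hspec (M : Matrix ι ι ℂ) : spectrum ℝ (M.submatrix e e) = spectrum ℝ M :=
    AlgEquiv.spectrum_eq (reindexAlgEquiv ℝ ℂ e.symm) M
  have hcombo : (s • A + (1 - s) • B).IsHermitian :=
    (hA.smul (IsSelfAdjoint.all s)).add (hB.smul (IsSelfAdjoint.all (1 - s)))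
  have h := hf _ _ (hA.submatrix e) (hB.submatrix e) ((hspec A).trans_subset hAI)
    ((hspec B).trans_subset hBI) s hs (sub_nonneg.1 ht)
  have hsub : s • A.submatrix e e + (1 - s) • B.submatrix e e =
      (s • A + (1 - s) • B).submatrix e e := rfl
  rw [hsub, cfc_submatrix_equiv f hA, cfc_submatrix_equiv f hB, cfc_submatrix_equiv f hcombo] at h
  exact Matrix.le_iff.2 ((posSemidef_submatrix_equiv e).1 h)

theorem cfc_conjTranspose_mul_mul_le
    (hf : MatrixConvexOn (Fintype.card ι + Fintype.card ρ) f I) (h0I : 0 ∈ I) (hf0 : f 0 ≤ 0)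
    {B : Matrix κ κ ℂ} (hB : B.IsHermitian) (hBI : spectrum ℝ B ⊆ I) {c : Matrix κ ι ℂ}
    {d : Matrix κ ρ ℂ} (hcd : c * cᴴ + d * dᴴ = 1) :
    cfc f (cᴴ * B * c) ≤ cᴴ * cfc f B * c := by
  classical
  rw [← Fintype.card_sum] at hf
  have hcoisometry (e : Matrix κ ρ ℂ) (he : e * eᴴ = d * dᴴ) :
      fromCols c e * (fromCols c e)ᴴ = 1 := by
    rw [conjTranspose_fromCols_eq_fromRows_conjTranspose, fromCols_mul_fromRows, he, hcd]
  have hR := hcoisometry d rfl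
  have hR' := hcoisometry (-d) (by simp)
  have hspec {R : Matrix κ (ι ⊕ ρ) ℂ} (hR : R * Rᴴ = 1) : spectrum ℝ (Rᴴ * B * R) ⊆ I :=
    (spectrum_conjTranspose_mul_mul_subset_of_coisometry hR).trans (insert_subset h0I hBI)
  have hherm (R : Matrix κ (ι ⊕ ρ) ℂ) : (Rᴴ * B * R).IsHermitian :=
    isHermitian_conjTranspose_mul_mul R hB
  have hblocks : cfc f (fromBlocks (cᴴ * B * c) 0 0 (dᴴ * B * d)) ≤
      fromBlocks (cᴴ * cfc f B * c) 0 0 (dᴴ * cfc f B * d) := by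
    simp only [← half_conj_fromCols_add_half_conj_fromCols_neg]
    refine (hf.cfc_add_le (hherm _) (hherm _) (hspec hR) (hspec hR') (by norm_num) (by norm_num)
      (add_halves 1)).trans ?_
    exact add_le_add
      (smul_le_smul_of_nonneg_left (cfc_conjTranspose_mul_mul_le_of_coisometry hf0 hB hR)
        (by norm_num))
      (smul_le_smul_of_nonneg_left (cfc_conjTranspose_mul_mul_le_of_coisometry hf0 hB hR')
        (by norm_num))
  rw [← toBlocks₁₁_cfc_fromBlocks f (isHermitian_conjTranspose_mul_mul c hB)
    (isHermitian_conjTranspose_mul_mul d hB), Matrix.le_iff]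
  exact (Matrix.le_iff.1 hblocks).submatrix Sum.inl

theorem cfc_div_le_cfc_div_add (hf : MatrixConvexOn (Fintype.card ι + Fintype.card ρ) f I)
    (h0I : 0 ∈ I) (hf0 : f 0 ≤ 0) {A : Matrix ι ι ℂ} {v : Matrix ι ρ ℂ} (hA : A.PosDef)
    (hI : spectrum ℝ (A + v * vᴴ) ⊆ I) :
    cfc (fun t => f t / t) A ≤ cfc (fun t => f t / t) (A + v * vᴴ) := by
  set B := A + v * vᴴ
  have hB : B.PosDef := hA.add_posSemidef (posSemidef_self_mul_conjTranspose v)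
  set a := cfc Real.sqrt A
  set b := cfc Real.sqrt B
  have ha : aᴴ = a := cfc_predicate Real.sqrt A
  have hb : bᴴ = b := cfc_predicate Real.sqrt B
  have haa : a * a = A := cfc_sqrt_mul_self hA.posSemidef
  have hbb : b * b = B := cfc_sqrt_mul_self hB.posSemidef
  have hbdet : IsUnit b.det := (isUnit_iff_isUnit_det b).1 (isUnit_cfc_sqrt hB)
  have hconj (M : Matrix ι ι ℂ) : (b⁻¹ * a)ᴴ * (b * M * b) * (b⁻¹ * a) = a * M * a := by
    simp only [conjTranspose_mul, conjTranspose_nonsing_inv, ha, hb, Matrix.mul_assoc,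
      nonsing_inv_mul_cancel_left _ _ hbdet, mul_nonsing_inv_cancel_left _ _ hbdet]
  have hcd : (b⁻¹ * a) * (b⁻¹ * a)ᴴ + (b⁻¹ * v) * (b⁻¹ * v)ᴴ = 1 := by
    calc (b⁻¹ * a) * (b⁻¹ * a)ᴴ + (b⁻¹ * v) * (b⁻¹ * v)ᴴ
        = b⁻¹ * (a * a + v * vᴴ) * b⁻¹ := by
          simp only [conjTranspose_mul, conjTranspose_nonsing_inv, ha, hb, Matrix.mul_add,
            Matrix.add_mul, Matrix.mul_assoc]
      _ = b⁻¹ * (b * b) * b⁻¹ := by rw [haa, hbb]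
      _ = 1 := by rw [nonsing_inv_mul_cancel_left _ _ hbdet, mul_nonsing_inv _ hbdet]
  have hJensen := hf.cfc_conjTranspose_mul_mul_le h0I hf0 hB.isHermitian hI hcd
  have hcBc : (b⁻¹ * a)ᴴ * B * (b⁻¹ * a) = A := by simpa [haa, hbb] using hconj 1
  rw [hcBc, ← cfc_sqrt_mul_cfc_div_mul_cfc_sqrt hB, hconj,
    ← cfc_sqrt_mul_cfc_div_mul_cfc_sqrt hA, Matrix.le_iff, ← Matrix.sub_mul,
    ← Matrix.mul_sub] at hJensen
  refine Matrix.le_iff.2 ((isUnit_cfc_sqrt hA).posSemidef_star_left_conjugate_iff.1 ?_)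
  rwa [star_eq_conjTranspose, ha]

end MatrixConvexOn

theorem stmt_8_general {m : ℕ} {f : ℝ → ℝ} {I : Set ℝ} (hI : I.OrdConnected) (h0I : 0 ∈ I)
    (hf0 : f 0 ≤ 0) (hf : MatrixConvexOn (m + 1) f I) :
    MatrixMonotoneOn m (fun t => f t / t) (I ∩ Ioi 0) := by
  intro A B hA hB hAI hBI hAB
  rw [← Matrix.le_iff] at hAB ⊢
  have hherm {X} (hX : X ∈ Icc A B) : X.IsHermitian := by
    simpa using (Matrix.le_iff.1 hX.1).isHermitian.add hA
  have hspec {X} (hX : X ∈ Icc A B) : spectrum ℝ X ⊆ I ∩ Ioi 0 :=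
    spectrum_subset_of_ordConnected (hI.inter ordConnected_Ioi) hA (hherm hX) hB hX.1 hX.2 hAI hBI
  have hposDef {X} (hX : X ∈ Icc A B) : X.PosDef :=
    isStrictlyPositive_iff_posDef.1 <|
      (StarOrderedRing.isStrictlyPositive_iff_spectrum_pos X (hherm hX)).2 fun _ ht =>
        (hspec hX ht).2
  refine map_le_map_of_rankOne_steps hAB fun X hX v hXv => ?_
  exact MatrixConvexOn.cfc_div_le_cfc_div_add (by simpa using hf) h0I hf0 (hposDef hX)
    ((hspec hXv).trans inter_subset_left)

/-- Theorem 3.2: if `f : [0,α) → ℝ` is continuous, `f(0) ≤ 0`, and `f` is matrix convex of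
order `n` on `[0,α)`, then `g(t) = f(t)/t` is matrix monotone of order `n - 1` on `(0,α)`. -/
theorem stmt_8 (n : ℕ) (hn : 2 ≤ n) (α : EReal) (hα : 0 < α) (f : ℝ → ℝ)
    (hfc : ContinuousOn f {x : ℝ | 0 ≤ x ∧ (x : EReal) < α})
    (hf0 : f 0 ≤ 0)
    (hconv : MatrixConvexOn n f {x : ℝ | 0 ≤ x ∧ (x : EReal) < α}) :
    MatrixMonotoneOn (n - 1) (fun t => f t / t) {x : ℝ | 0 < x ∧ (x : EReal) < α} := by
  obtain ⟨m, rfl⟩ := Nat.exists_eq_add_of_le' (one_le_two.trans hn)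
  have hI : {x : ℝ | 0 ≤ x ∧ (x : EReal) < α}.OrdConnected :=
    ⟨fun _ hx _ hy _ hz => ⟨hx.1.trans hz.1, (EReal.coe_le_coe_iff.2 hz.2).trans_lt hy.2⟩⟩
  have hpos : {x : ℝ | 0 < x ∧ (x : EReal) < α} = {x : ℝ | 0 ≤ x ∧ (x : EReal) < α} ∩ Ioi 0 :=
    Set.ext fun _ => ⟨fun hx => ⟨⟨hx.1.le, hx.2⟩, hx.1⟩, fun hx => ⟨hx.2, hx.1.2⟩⟩
  rw [hpos]
  exact stmt_8_general hI ⟨le_rfl, hα⟩ hf0 hconv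
end

section
/- Let f : ℝ → ℝ be the polynomial f(t) = −t³ + 2t² − t. Then g(t) = f(t)/t = −(t−1)² is monotone increasing on the interval (0,1), but f is not convex on [0,1) (that is, f is not matrix convex of order 1 on [0,1)). -/
/-!
On real scalar matrices the functional calculus is evaluation and the Loewner order is the order of
`ℝ`, so matrix convexity of any positive order forces ordinary convexity. The cubic
`f t = -t³ + 2t² - t = -t (t - 1)²` violates it: since `f'' t = 4 - 6t` is negative beyond `2/3`,
`f` is strictly concave on the part `[2/3, 1)` of the interval, while `f t / t = -(t - 1)²`
increases up to `t = 1`.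
-/

open Matrix Set MeasureTheory
open scoped ComplexOrder

theorem posSemidef_algebraMap_iff {𝕜 m : Type*} [RCLike 𝕜] [Fintype m] [DecidableEq m] [Nonempty m]
    {r : ℝ} : (algebraMap ℝ (Matrix m m 𝕜) r).PosSemidef ↔ 0 ≤ r := by
  simp [algebraMap_eq_diagonal]

namespace MatrixConvexOn

variable {n : ℕ} [NeZero n] {f : ℝ → ℝ} {I : Set ℝ}

theorem map_combo_le (h : MatrixConvexOn n f I) {s t : ℝ} (hs : s ∈ I) (ht : t ∈ I)
    {l : ℝ} (hl₀ : 0 ≤ l) (hl₁ : l ≤ 1) :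
    f (l * s + (1 - l) * t) ≤ l * f s + (1 - l) * f t := by
  let scalar : ℝ →+* Matrix (Fin n) (Fin n) ℂ := algebraMap ℝ _
  have isHermitian_scalar (r : ℝ) : (scalar r).IsHermitian :=
    IsSelfAdjoint.algebraMap _ (.all r)
  have spectrum_scalar_subset {r : ℝ} (hr : r ∈ I) : spectrum ℝ (scalar r) ⊆ I := by
    rw [spectrum.scalar_eq]
    exact singleton_subset_iff.mpr hr
  have smul_scalar (a r : ℝ) : a • scalar r = scalar (a * r) := by
    rw [map_mul, Algebra.smul_def]
  have cfc_scalar (r : ℝ) : cfc f (scalar r) = scalar (f r) := cfc_algebraMap r f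
  have loewner_le := h _ _ (isHermitian_scalar s) (isHermitian_scalar t)
    (spectrum_scalar_subset hs) (spectrum_scalar_subset ht) l hl₀ hl₁
  simp only [smul_scalar, cfc_scalar, ← map_add, ← map_sub] at loewner_le
  exact sub_nonneg.mp (posSemidef_algebraMap_iff.mp loewner_le)

theorem convexOn (h : MatrixConvexOn n f I) (hI : Convex ℝ I) : ConvexOn ℝ I f := by
  refine ⟨hI, fun s hs t ht a b ha hb hab => ?_⟩
  obtain rfl : b = 1 - a := eq_sub_of_add_eq' hab
  exact h.map_combo_le hs ht ha (sub_nonneg.mp hb)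

end MatrixConvexOn

theorem not_convexOn_of_strictConcaveOn {𝕜 E β : Type*} [Field 𝕜] [LinearOrder 𝕜]
    [IsStrictOrderedRing 𝕜] [AddCommMonoid E] [SMul 𝕜 E] [AddCommMonoid β] [PartialOrder β]
    [SMul 𝕜 β] {s t : Set E} {f : E → β} (hf : StrictConcaveOn 𝕜 s f)
    (hst : (s ∩ t).Nontrivial) : ¬ ConvexOn 𝕜 t f := by
  intro hconv
  obtain ⟨x, ⟨hxs, hxt⟩, y, ⟨hys, hyt⟩, hxy⟩ := hst
  have hhalf : (0 : 𝕜) < 1 / 2 := one_half_pos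
  exact (hf.2 hxs hys hxy hhalf hhalf (add_halves 1)).not_ge
    (hconv.2 hxt hyt hhalf.le hhalf.le (add_halves 1))

theorem strictConcaveOn_neg_cubic {𝕜 : Type*} [Field 𝕜] [LinearOrder 𝕜] [IsStrictOrderedRing 𝕜]
    (p q : 𝕜) :
    StrictConcaveOn 𝕜 (Ici (p / 3)) (fun t => -t ^ 3 + p * t ^ 2 + q * t) := by
  refine ⟨convex_Ici _, fun x hx y hy hxy a b ha hb hab => ?_⟩
  obtain rfl : b = 1 - a := eq_sub_of_add_eq' hab
  have hx : p / 3 ≤ x := hx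
  have hy : p / 3 ≤ y := hy
  have hweights : 0 < a * (1 - a) * (x - y) ^ 2 :=
    mul_pos (mul_pos ha hb) (sq_pos_of_ne_zero (sub_ne_zero.mpr hxy))
  have hfactor : 0 < (1 + a) * x + (2 - a) * y - p := by
    have hsum : 0 < (1 + a) * (x - p / 3) + (1 + (1 - a)) * (y - p / 3) := by
      rcases hxy.lt_or_gt with hlt | hgt
      · exact add_pos_of_nonneg_of_pos (mul_nonneg (by positivity) (sub_nonneg.mpr hx))
          (mul_pos (by positivity) (sub_pos.mpr (hx.trans_lt hlt)))
      · exact add_pos_of_pos_of_nonneg (mul_pos (by positivity) (sub_pos.mpr (hy.trans_lt hgt)))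
          (mul_nonneg (by positivity) (sub_nonneg.mpr hy))
    linear_combination hsum
  -- This product is exactly the value at the combination minus the combination of the values.
  have hgap := mul_pos hweights hfactor
  simp only [smul_eq_mul]
  linear_combination hgap

theorem monotoneOn_neg_sub_sq {R : Type*} [CommRing R] [LinearOrder R] [IsStrictOrderedRing R]
    (a : R) : MonotoneOn (fun t => -(t - a) ^ 2) (Iic a) := by
  intro s _ t ht hst
  have hle : a - t ≤ a - s := sub_le_sub_left hst a
  simpa only [sub_sq_comm _ a] using
    neg_le_neg (pow_le_pow_left₀ (sub_nonneg.mpr ht) hle 2)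

/-- Proposition 3.5 (counterexample part): for `f(t) = -t³ + 2t² - t`, the function
`g(t) = f(t)/t = -(t-1)²` is monotone increasing on `(0,1)`, but `f` is not convex
(i.e. not matrix convex of order 1) on `[0,1)`. -/
theorem stmt_11 :
    (∀ t ∈ Ioo (0:ℝ) 1, (-t^3 + 2*t^2 - t) / t = -(t - 1)^2) ∧
    MonotoneOn (fun t : ℝ => (-t^3 + 2*t^2 - t) / t) (Ioo (0:ℝ) 1) ∧
    ¬ MatrixConvexOn 1 (fun t : ℝ => -t^3 + 2*t^2 - t) (Ico (0:ℝ) 1) := by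
  have hdiv : ∀ t ∈ Ioo (0:ℝ) 1, (-t^3 + 2*t^2 - t) / t = -(t - 1)^2 := by
    intro t ht
    have ht₀ : t ≠ 0 := ht.1.ne'
    field_simp
    ring
  have hmono : MonotoneOn (fun t : ℝ => -(t - 1)^2) (Ioo 0 1) :=
    (monotoneOn_neg_sub_sq 1).mono fun t ht => ht.2.le
  have hconcave : StrictConcaveOn ℝ (Ici (2 / 3)) (fun t : ℝ => -t^3 + 2*t^2 - t) := by
    simpa only [neg_one_mul, ← sub_eq_add_neg] using strictConcaveOn_neg_cubic (2 : ℝ) (-1)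
  have hoverlap : (Ici (2 / 3) ∩ Ico (0:ℝ) 1).Nontrivial :=
    ⟨2 / 3, by norm_num, 3 / 4, by norm_num, by norm_num⟩
  refine ⟨hdiv, hmono.congr fun t ht => (hdiv t ht).symm, fun hconv => ?_⟩
  exact not_convexOn_of_strictConcaveOn hconcave hoverlap (hconv.convexOn (convex_Ico 0 1))
end

section
/- Let 0 < α ≤ ∞ and let f be a real polynomial of degree at most 5 with f(0) ≤ 0. If f is matrix convex of order 2 on [0,α), then the function g(t) = f(t)/t is matrix monotone of order 2 on (0,α). -/
/-!
Write `f(t)/t = q(t) + f(0)/t` with the polynomial `q(t) = (f(t) - f(0))/t`. Since `f(0) ≤ 0` and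
`-1/t` is operator monotone, it is enough that `q` is 2-monotone. Let `hₖ = h⁽ᵏ⁾/k!`.

* The second-order term of `f` at a diagonal matrix in a Hermitian direction is positive
  semidefinite by convexity. As in Kraus' theorem, for two nodes `a`, `b` this makes the Loewner
  matrix of `f[a, ·]` at `a`, `b` positive semidefinite, and in the limit `b → a` so is the Hankel
  matrix `M(a) = (f₂, f₃; f₃, f₄)`.
* Let `N(t) = (q₁, q₂; q₂, q₃)`. With `C(t) = (1, 0; t, 1)`, the matrix `t⁴ C(t)ᵀ N(t) C(t)` has
  derivative `4t³ C(t)ᵀ M(t) C(t)` and vanishes at `0`, so `N(t)` is positive semidefinite. This and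
  the next identity are linear in the function, and both are found on `1/(λ - t)`, for which every
  matrix in sight has rank one.
* The Loewner matrix of `q` at `a < b` is an integral of matrices congruent to `N(t)` against the
  weight `6(t - a)(b - t)/(b - a)³` on `[a, b]`, hence positive semidefinite. The derivative of
  `q(A + sH)` is the entrywise product of `H` with such a Loewner matrix in an eigenbasis, so by the
  Schur product theorem it is positive semidefinite for `H ≥ 0`.
-/

open Matrix Set MeasureTheory
open scoped ComplexOrder

open Polynomial

section DividedDifferences

variable {R : Type*} [CommRing R]

lemma X_sub_C_mul_divByMonic_add_C_eval (q : R[X]) (a : R) :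
    (X - C a) * (q /ₘ (X - C a)) + C (q.eval a) = q := by
  rw [← modByMonic_X_sub_C_eq_C_eval, add_comm, modByMonic_add_div]

lemma divByMonic_X_sub_C_eq_of_eq {q Q : R[X]} {a r : R} (h : q = (X - C a) * Q + C r) :
    q /ₘ (X - C a) = Q := by
  nontriviality R
  refine (div_modByMonic_unique Q (C r) (monic_X_sub_C a) ⟨by rw [h, add_comm], ?_⟩).1
  exact degree_C_le.trans_lt (by simp)

lemma add_divByMonic_X_sub_C (p q : R[X]) (a : R) :
    (p + q) /ₘ (X - C a) = p /ₘ (X - C a) + q /ₘ (X - C a) := by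
  refine divByMonic_X_sub_C_eq_of_eq (r := p.eval a + q.eval a) ?_
  conv_lhs => rw [← X_sub_C_mul_divByMonic_add_C_eval p a, ← X_sub_C_mul_divByMonic_add_C_eval q a]
  rw [C_add]
  ring

lemma C_divByMonic_X_sub_C (r a : R) : C r /ₘ (X - C a) = 0 :=
  divByMonic_X_sub_C_eq_of_eq (r := r) (by simp)

lemma mul_X_divByMonic_X_sub_C (q : R[X]) (a : R) :
    (q * X) /ₘ (X - C a) = q /ₘ (X - C a) * X + C (q.eval a) := by
  refine divByMonic_X_sub_C_eq_of_eq (r := a * q.eval a) ?_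
  conv_lhs => rw [← X_sub_C_mul_divByMonic_add_C_eval q a]
  rw [C_mul]
  ring

/-- The first divided difference `q[a, b]`, equal to `(q(b) - q(a)) / (b - a)` for `a ≠ b` and to
`q'(a)` for `a = b`; dividing polynomials treats both cases at once. -/
noncomputable def divDiff (q : R[X]) (a b : R) : R := (q /ₘ (X - C a)).eval b

lemma sub_mul_divDiff (q : R[X]) (a b : R) : (b - a) * divDiff q a b = q.eval b - q.eval a := by
  have h := congrArg (eval b) (X_sub_C_mul_divByMonic_add_C_eval q a)
  simp only [eval_add, eval_mul, eval_sub, eval_X, eval_C] at h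
  rw [divDiff, ← h, add_sub_cancel_right]

lemma divDiff_self (q : R[X]) (a : R) : divDiff q a a = (derivative q).eval a := by
  rw [← divByMonic_add_X_sub_C_mul_derivative_divByMonic_eq_derivative q a]
  simp [divDiff]

lemma divDiff_comm [IsDomain R] (q : R[X]) (a b : R) : divDiff q a b = divDiff q b a := by
  obtain rfl | hab := eq_or_ne a b
  · rfl
  · refine mul_left_cancel₀ (sub_ne_zero.2 hab.symm) ?_
    rw [sub_mul_divDiff, ← neg_sub a b, neg_mul, sub_mul_divDiff, neg_sub]

@[simp] lemma divDiff_add (p q : R[X]) (a b : R) :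
    divDiff (p + q) a b = divDiff p a b + divDiff q a b := by
  simp [divDiff, add_divByMonic_X_sub_C]

@[simp] lemma divDiff_C (r a b : R) : divDiff (C r) a b = 0 := by
  simp [divDiff, C_divByMonic_X_sub_C]

lemma divDiff_mul_X (q : R[X]) (a b : R) :
    divDiff (q * X) a b = divDiff q a b * b + q.eval a := by
  simp [divDiff, mul_X_divByMonic_X_sub_C]

lemma taylor_coeff_succ (q : R[X]) (a : R) (k : ℕ) :
    (taylor a q).coeff (k + 1) = (taylor a (q /ₘ (X - C a))).coeff k := by
  conv_lhs => rw [← X_sub_C_mul_divByMonic_add_C_eval q a]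
  simp [taylor_mul]

lemma taylor_coeff_succ_eq_divX (p : R[X]) (t : R) (k : ℕ) :
    (taylor t p).coeff (k + 1)
      = t * (taylor t p.divX).coeff (k + 1) + (taylor t p.divX).coeff k := by
  conv_lhs => rw [← divX_mul_X_add p]
  rw [map_add, taylor_mul, taylor_X, taylor_C, coeff_add, coeff_C_succ, mul_add, coeff_add,
    coeff_mul_X, coeff_mul_C]
  ring

end DividedDifferences

section Forms

lemma hasDerivAt_taylor_coeff (q : ℝ[X]) (k : ℕ) (t : ℝ) :
    HasDerivAt (fun s => (taylor s q).coeff k) ((k + 1) * (taylor t q).coeff (k + 1)) t := by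
  have h := (hasseDeriv k q).hasDerivAt t
  rw [← hasseDeriv_one', ← LinearMap.comp_apply, hasseDeriv_comp] at h
  simpa [taylor_coeff, add_comm, add_mul] using h

/-- The quadratic form `(u, v) ↦ qₖ u² + 2 qₖ₊₁ u v + qₖ₊₂ v²` of a `2 × 2` Hankel matrix of Taylor
coefficients `qⱼ = q⁽ʲ⁾(t) / j!` of `q` at `t`. -/
noncomputable def hankelForm (q : ℝ[X]) (k : ℕ) (t u v : ℝ) : ℝ :=
  (taylor t q).coeff k * u ^ 2 + 2 * (taylor t q).coeff (k + 1) * u * v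
    + (taylor t q).coeff (k + 2) * v ^ 2

/-- The quadratic form of the `2 × 2` Loewner matrix of `q` at the nodes `a` and `b`. -/
noncomputable def loewnerForm (q : ℝ[X]) (a b x y : ℝ) : ℝ :=
  divDiff q a a * x ^ 2 + 2 * divDiff q a b * x * y + divDiff q b b * y ^ 2

lemma le_of_hasDerivAt_nonneg {f f' : ℝ → ℝ} {a b : ℝ} (hab : a ≤ b)
    (hf : ∀ t ∈ Icc a b, HasDerivAt f (f' t) t) (hf' : ∀ t ∈ Ioo a b, 0 ≤ f' t) : f a ≤ f b := by
  refine monotoneOn_of_deriv_nonneg (convex_Icc a b)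
    (fun t ht => (hf t ht).continuousAt.continuousWithinAt)
    (fun t ht => (hf t (interior_subset ht)).differentiableAt.differentiableWithinAt)
    (fun t ht => ?_) (left_mem_Icc.2 hab) (right_mem_Icc.2 hab) hab
  rw [interior_Icc] at ht
  exact (hf t (Ioo_subset_Icc_self ht)).deriv ▸ hf' t ht

/- Found on `q = 1 / (λ - ·)`, where the Hankel form is `(x (λ - b) + y (λ - a))² / (λ - t)⁴`, from
`∫ₐᵇ 6 (t - a) (b - t) / (λ - t)⁴ dt = (b - a)³ / ((λ - a)² (λ - b)²)`; the primitive comes from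
integration by parts. -/
lemma hasDerivAt_hankelForm_primitive (q : ℝ[X]) (a b x y t : ℝ) :
    HasDerivAt (fun t => 2 * (t - a) * (b - t) * (x * (t - b) + y * (t - a)) ^ 2
          * (taylor t q).coeff 2
        + (4 * (t - a) * (b - t) * (x + y) * (x * (t - b) + y * (t - a))
          - (a + b - 2 * t) * (x * (t - b) + y * (t - a)) ^ 2) * (taylor t q).coeff 1
        + 2 * x * y * (b - a) ^ 2 * q.eval t)
      (6 * (t - a) * (b - t) * hankelForm q 1 t (x + y) (x * (t - b) + y * (t - a))) t := by
  have hq₀ : HasDerivAt (fun t => q.eval t) ((taylor t q).coeff 1) t := by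
    simpa using q.hasDerivAt t
  have hq₁ := hasDerivAt_taylor_coeff q 1 t
  have hq₂ := hasDerivAt_taylor_coeff q 2 t
  have ha : HasDerivAt (fun t => t - a) 1 t := (hasDerivAt_id t).sub_const a
  have hb : HasDerivAt (fun t => t - b) 1 t := (hasDerivAt_id t).sub_const b
  have hb' : HasDerivAt (fun t => b - t) (-1) t := (hasDerivAt_id t).const_sub b
  have hab : HasDerivAt (fun t => a + b - 2 * t) (-(2 * 1)) t :=
    ((hasDerivAt_id t).const_mul 2).const_sub (a + b)
  have hℓ := (hb.const_mul x).fun_add (ha.const_mul y)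
  refine ((((((ha.const_mul 2).fun_mul hb').fun_mul (hℓ.fun_pow 2)).fun_mul hq₂).fun_add
    ((((((ha.const_mul 4).fun_mul hb').mul_const (x + y)).fun_mul hℓ).fun_sub
      (hab.fun_mul (hℓ.fun_pow 2))).fun_mul hq₁)).fun_add
    (hq₀.const_mul (2 * x * y * (b - a) ^ 2))).congr_deriv ?_
  simp only [hankelForm]
  push_cast
  ring

theorem loewnerForm_nonneg_of_hankelForm_nonneg {q : ℝ[X]} {I : Set ℝ} (hI : I.OrdConnected)
    (hq : ∀ t ∈ I, ∀ u v, 0 ≤ hankelForm q 1 t u v) {a b : ℝ} (ha : a ∈ I) (hb : b ∈ I)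
    (x y : ℝ) : 0 ≤ loewnerForm q a b x y := by
  wlog hab : a ≤ b generalizing a b x y
  · have := this hb ha y x (le_of_not_ge hab)
    rw [loewnerForm, divDiff_comm q b a] at this
    rw [loewnerForm]
    linarith
  obtain rfl | hab := hab.eq_or_lt
  · have h := hq a ha (x + y) 0
    simp only [hankelForm, taylor_coeff_one] at h
    rw [loewnerForm, divDiff_self]
    linarith
  have h := le_of_hasDerivAt_nonneg hab.le
    (fun t _ => hasDerivAt_hankelForm_primitive q a b x y t) fun t ht =>
      mul_nonneg (mul_nonneg (by linarith [ht.1]) (by linarith [ht.2]))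
        (hq t (hI.out ha hb (Ioo_subset_Icc_self ht)) _ _)
  simp only [taylor_coeff_one] at h
  have hd := sub_mul_divDiff q a b
  have : 0 ≤ (b - a) ^ 3 * loewnerForm q a b x y := by
    rw [loewnerForm, divDiff_self, divDiff_self]
    linear_combination h - 2 * x * y * (b - a) ^ 2 * hd
  exact nonneg_of_mul_nonneg_right this (pow_pos (sub_pos.2 hab) 3)

/- In these variables the Loewner matrix becomes `(q[a,a], q[a,a,b]; q[a,a,b], q[a,a,b,b])`, which
stays bounded as `b → a`. -/
lemma loewnerForm_sub_div_div_eq (q : ℝ[X]) {a b : ℝ} (hab : a ≠ b) (u v : ℝ) :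
    loewnerForm q a b (u - v / (b - a)) (v / (b - a))
      = divDiff q a a * u ^ 2 + 2 * divDiff (q /ₘ (X - C a)) a b * u * v
        + (derivative (q /ₘ (X - C a) /ₘ (X - C a))).eval b * v ^ 2 := by
  have hba : b - a ≠ 0 := sub_ne_zero.2 hab.symm
  have h₁ : divDiff q a b
      = divDiff q a a + (b - a) * divDiff (q /ₘ (X - C a)) a b := by
    rw [sub_mul_divDiff, divDiff, divDiff, add_sub_cancel]
  have h₂ : (derivative q).eval b
      = divDiff q a b + (b - a) * (derivative (q /ₘ (X - C a))).eval b := by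
    rw [← divByMonic_add_X_sub_C_mul_derivative_divByMonic_eq_derivative q a]
    simp [divDiff]
  have h₃ : (derivative (q /ₘ (X - C a))).eval b = divDiff (q /ₘ (X - C a)) a b
      + (b - a) * (derivative (q /ₘ (X - C a) /ₘ (X - C a))).eval b := by
    rw [← divByMonic_add_X_sub_C_mul_derivative_divByMonic_eq_derivative (q /ₘ (X - C a)) a]
    simp [divDiff]
  rw [loewnerForm, divDiff_self q b, h₂, h₃, h₁]
  field_simp
  ring

open Filter Topology in
theorem hankelForm_nonneg_of_loewnerForm_nonneg {q : ℝ[X]} {a : ℝ}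
    (hq : ∀ᶠ b in 𝓝[≠] a, ∀ x y, 0 ≤ loewnerForm q a b x y) (u v : ℝ) :
    0 ≤ hankelForm q 1 a u v := by
  have hcont : Continuous fun b => divDiff q a a * u ^ 2
      + 2 * divDiff (q /ₘ (X - C a)) a b * u * v
      + (derivative (q /ₘ (X - C a) /ₘ (X - C a))).eval b * v ^ 2 := by
    simp only [divDiff]
    fun_prop
  have h : hankelForm q 1 a u v = divDiff q a a * u ^ 2
      + 2 * divDiff (q /ₘ (X - C a)) a a * u * v
      + (derivative (q /ₘ (X - C a) /ₘ (X - C a))).eval a * v ^ 2 := by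
    simp only [hankelForm, taylor_coeff_succ q, taylor_coeff_succ (q /ₘ _), ← taylor_coeff_one,
      taylor_coeff_zero, divDiff]
  rw [h]
  refine ge_of_tendsto (x := 𝓝[≠] a) ((hcont.tendsto a).mono_left nhdsWithin_le_nhds) ?_
  filter_upwards [hq, self_mem_nhdsWithin] with b hb hba
  rw [← loewnerForm_sub_div_div_eq q (Ne.symm hba)]
  exact hb _ _

lemma hankelForm_divByMonic_X_sub_C (q : ℝ[X]) (k : ℕ) (a u v : ℝ) :
    hankelForm (q /ₘ (X - C a)) k a u v = hankelForm q (k + 1) a u v := by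
  simp only [hankelForm, taylor_coeff_succ q]

/- For `p = 1 / (λ - ·)` this is `(λ u + v)²` times the derivative `4 t³ / (λ - t)⁵` of
`t⁴ / (λ (λ - t)⁴)`; both sides are linear in `p`. -/
lemma hasDerivAt_pow_four_mul_hankelForm_divX (p : ℝ[X]) (u v t : ℝ) :
    HasDerivAt (fun t => t ^ 4 * hankelForm p.divX 1 t u (v + t * u))
      (4 * t ^ 3 * hankelForm p 2 t u (v + t * u)) t := by
  have h₁ := hasDerivAt_taylor_coeff p.divX 1 t
  have h₂ := hasDerivAt_taylor_coeff p.divX 2 t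
  have h₃ := hasDerivAt_taylor_coeff p.divX 3 t
  have hℓ : HasDerivAt (fun t => v + t * u) (1 * u) t := ((hasDerivAt_id t).mul_const u).const_add v
  refine (((hasDerivAt_id' t).fun_pow 4).fun_mul (((h₁.mul_const (u ^ 2)).fun_add
    (((h₂.const_mul 2).mul_const u).fun_mul hℓ)).fun_add
      (h₃.fun_mul (hℓ.fun_pow 2)))).congr_deriv ?_
  simp only [hankelForm, taylor_coeff_succ_eq_divX p]
  push_cast
  ring

theorem hankelForm_divX_nonneg {p : ℝ[X]} {t : ℝ} (ht : 0 < t)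
    (hp : ∀ s ∈ Ioo 0 t, ∀ u v, 0 ≤ hankelForm p 2 s u v) (u v : ℝ) :
    0 ≤ hankelForm p.divX 1 t u v := by
  have h := le_of_hasDerivAt_nonneg ht.le
    (fun s _ => hasDerivAt_pow_four_mul_hankelForm_divX p u (v - t * u) s) fun s hs =>
      mul_nonneg (by have := hs.1; positivity) (hp s hs _ _)
  simp only [sub_add_cancel] at h
  exact nonneg_of_mul_nonneg_right (by simpa using h) (pow_pos ht 4)

end Forms

section MatrixPolynomials

/-- The Loewner matrix `(q[dᵢ, dⱼ])` of `q` at the nodes `d`, with complex entries so that it can be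
multiplied entrywise with Hermitian matrices. -/
noncomputable def loewnerMatrix {ι : Type*} (q : ℝ[X]) (d : ι → ℝ) : Matrix ι ι ℂ :=
  Matrix.of fun i j => ((divDiff q (d i) (d j) : ℝ) : ℂ)

variable {ι : Type*} [Fintype ι]

/-- The quadratic form `v ↦ Re (v* M v)` as a function of the matrix `M`. -/
def reQuadForm (v : ι → ℂ) : Matrix ι ι ℂ →ₗ[ℝ] ℝ where
  toFun M := (star v ⬝ᵥ (M *ᵥ v)).re
  map_add' M N := by rw [Matrix.add_mulVec, dotProduct_add, Complex.add_re]
  map_smul' r M := by rw [Matrix.smul_mulVec, dotProduct_smul, Complex.smul_re, RingHom.id_apply]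

lemma posSemidef_of_reQuadForm_nonneg {M : Matrix ι ι ℂ} (hM : M.IsHermitian)
    (h : ∀ v, 0 ≤ reQuadForm v M) : M.PosSemidef :=
  .of_dotProduct_mulVec_nonneg hM fun v =>
    Complex.nonneg_iff.2 ⟨h v, (hM.im_star_dotProduct_mulVec_self v).symm⟩

/-- Half the second derivative at `s = 0` of `s ↦ q(diag(d) + s H)`, with entries
`∑ₘ q[dᵢ, dₘ, dⱼ] Hᵢₘ Hₘⱼ`; the second divided difference is written as a first divided
difference of `q[dₘ, ·]`. -/
noncomputable def secondOrderTerm (q : ℝ[X]) (d : ι → ℝ) (H : Matrix ι ι ℂ) : Matrix ι ι ℂ :=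
  Matrix.of fun i j =>
    ∑ m, ((divDiff (q /ₘ (X - C (d m))) (d i) (d j) : ℝ) : ℂ) * (H i m * H m j)

variable [DecidableEq ι]

lemma loewnerMatrix_mul_X_hadamard (q : ℝ[X]) (d : ι → ℝ) (H : Matrix ι ι ℂ) :
    loewnerMatrix (q * X) d ⊙ H = (loewnerMatrix q d ⊙ H) * diagonal (fun i => (d i : ℂ))
      + diagonal (fun i => ((q.eval (d i) : ℝ) : ℂ)) * H := by
  ext i j
  simp only [loewnerMatrix, divDiff_mul_X, Complex.ofReal_add, Complex.ofReal_mul, hadamard_apply,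
    of_apply, Matrix.add_apply, mul_diagonal, diagonal_mul]
  ring

lemma secondOrderTerm_mul_X (q : ℝ[X]) (d : ι → ℝ) (H : Matrix ι ι ℂ) :
    secondOrderTerm (q * X) d H = secondOrderTerm q d H * diagonal (fun i => (d i : ℂ))
      + (loewnerMatrix q d ⊙ H) * H := by
  have hdiv : ∀ a b c : ℝ, divDiff ((q * X) /ₘ (X - C a)) b c
      = divDiff (q /ₘ (X - C a)) b c * c + divDiff q b a := fun a b c => by
    rw [mul_X_divByMonic_X_sub_C, divDiff_add, divDiff_C, add_zero, divDiff_mul_X, divDiff_comm q b]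
    rfl
  ext i j
  rw [Matrix.add_apply, mul_diagonal, Matrix.mul_apply]
  simp only [secondOrderTerm, loewnerMatrix, hdiv, of_apply, hadamard_apply, Finset.sum_mul,
    ← Finset.sum_add_distrib, Complex.ofReal_add, Complex.ofReal_mul]
  exact Finset.sum_congr rfl fun m _ => by ring

theorem exists_aeval_diagonal_add_smul_eq (q : ℝ[X]) (d : ι → ℝ) (H : Matrix ι ι ℂ) :
    ∃ R : ℝ → Matrix ι ι ℂ, Continuous R ∧ ∀ s : ℝ,
      aeval (diagonal (fun i => (d i : ℂ)) + s • H) q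
        = diagonal (fun i => ((q.eval (d i) : ℝ) : ℂ)) + s • (loewnerMatrix q d ⊙ H)
          + s ^ 2 • secondOrderTerm q d H + s ^ 3 • R s := by
  induction q using Polynomial.induction_on with
  | C r =>
    refine ⟨0, continuous_zero, fun s => ?_⟩
    ext i j
    simp [loewnerMatrix, secondOrderTerm, divDiff, C_divByMonic_X_sub_C,
      Matrix.algebraMap_matrix_apply, diagonal_apply]
  | add p q hp hq =>
    obtain ⟨P, hP, hp⟩ := hp
    obtain ⟨Q, hQ, hq⟩ := hq
    refine ⟨P + Q, hP.add hQ, fun s => ?_⟩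
    have hL : loewnerMatrix (p + q) d = loewnerMatrix p d + loewnerMatrix q d := by
      ext i j
      simp [loewnerMatrix]
    have hS : secondOrderTerm (p + q) d H = secondOrderTerm p d H + secondOrderTerm q d H := by
      ext i j
      simp [secondOrderTerm, add_divByMonic_X_sub_C, add_mul, Finset.sum_add_distrib]
    rw [map_add, hp, hq, hL, hS, add_hadamard]
    simp only [eval_add, Complex.ofReal_add, ← diagonal_add, Pi.add_apply]
    module
  | monomial k r ih =>
    set q : ℝ[X] := C r * X ^ k
    obtain ⟨R, hR, ih⟩ := ih
    refine ⟨fun s => R s * diagonal (fun i => (d i : ℂ)) + secondOrderTerm q d H * H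
      + s • (R s * H), by fun_prop, fun s => ?_⟩
    have hdiag : diagonal (fun i => (((q * X).eval (d i) : ℝ) : ℂ))
        = diagonal (fun i => ((q.eval (d i) : ℝ) : ℂ)) * diagonal (fun i => (d i : ℂ)) := by
      simp
    rw [pow_succ, ← mul_assoc, map_mul, aeval_X, ih, hdiag, loewnerMatrix_mul_X_hadamard,
      secondOrderTerm_mul_X]
    simp only [add_mul, mul_add, smul_mul_assoc, mul_smul_comm]
    module

section LoewnerOrder

open scoped Matrix.Norms.L2Operator MatrixOrder
open Filter Topology

theorem hasDerivAt_aeval_diagonal_add_smul (q : ℝ[X]) (d : ι → ℝ) (H : Matrix ι ι ℂ) :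
    HasDerivAt (fun s : ℝ => aeval (diagonal (fun i => (d i : ℂ)) + s • H) q)
      (loewnerMatrix q d ⊙ H) 0 := by
  obtain ⟨R, hR, h⟩ := exists_aeval_diagonal_add_smul_eq q d H
  have hlim : Tendsto (fun s : ℝ => loewnerMatrix q d ⊙ H + s • secondOrderTerm q d H + s ^ 2 • R s)
      (𝓝[≠] 0) (𝓝 (loewnerMatrix q d ⊙ H)) :=
    (Continuous.tendsto' (by fun_prop) _ _ (by simp)).mono_left nhdsWithin_le_nhds
  refine hasDerivAt_iff_tendsto_slope_zero.2 (hlim.congr' ?_)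
  filter_upwards [self_mem_nhdsWithin] with s hs
  rw [zero_add, h, h, eq_inv_smul_iff₀ hs]
  module

theorem exists_posSemidef_hasDerivAt_aeval_add_smul {q : ℝ[X]} {A H : Matrix ι ι ℂ}
    (hA : A.IsHermitian) (hq : (loewnerMatrix q hA.eigenvalues).PosSemidef) (hH : H.PosSemidef) :
    ∃ D : Matrix ι ι ℂ, D.PosSemidef ∧ HasDerivAt (fun s : ℝ => aeval (A + s • H) q) D 0 := by
  set φ := Unitary.conjStarAlgAut ℂ (Matrix ι ι ℂ) hA.eigenvectorUnitary with hφ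
  have hφH : (φ.symm H).PosSemidef := by
    rw [hφ, Unitary.conjStarAlgAut_symm_apply]
    exact hH.conjTranspose_mul_mul_same _
  let Φ : Matrix ι ι ℂ →ₐ[ℝ] Matrix ι ι ℂ := (φ.toAlgEquiv : _ →ₐ[ℂ] _).restrictScalars ℝ
  have hΦ : ∀ s : ℝ, aeval (A + s • H) q
      = Φ (aeval (diagonal (fun i => (hA.eigenvalues i : ℂ)) + s • φ.symm H) q) := fun s => by
    rw [← aeval_algHom_apply, map_add, map_smul]
    congr 3
    · exact hA.spectral_theorem
    · exact congrArg (s • ·) (φ.apply_symm_apply H).symm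
  refine ⟨Φ (loewnerMatrix q hA.eigenvalues ⊙ φ.symm H), ?_, ?_⟩
  · exact (hq.hadamard hφH).mul_mul_conjTranspose_same _
  · simp only [hΦ]
    exact (Φ.toLinearMap.toContinuousLinearMap.hasFDerivAt).comp_hasDerivAt 0
      (hasDerivAt_aeval_diagonal_add_smul q hA.eigenvalues (φ.symm H))

lemma spectrum_add_smul_sub_subset {I : Set ℝ} (hI : I.OrdConnected) {A B : Matrix ι ι ℂ}
    (hA : A.IsHermitian) (hB : B.IsHermitian) (hAI : spectrum ℝ A ⊆ I) (hBI : spectrum ℝ B ⊆ I)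
    (hAB : (B - A).PosSemidef) {s : ℝ} (hs : s ∈ Icc (0 : ℝ) 1) :
    spectrum ℝ (A + s • (B - A)) ⊆ I := by
  cases isEmpty_or_nonempty ι
  · simp
  have hC : (A + s • (B - A)).IsHermitian := hA.add (hAB.smul hs.1).isHermitian
  have hAC : A ≤ A + s • (B - A) := by
    rw [Matrix.le_iff, add_sub_cancel_left]
    exact hAB.smul hs.1
  have hCB : A + s • (B - A) ≤ B := by
    rw [Matrix.le_iff, show B - (A + s • (B - A)) = (1 - s) • (B - A) by module]
    exact hAB.smul (sub_nonneg.2 hs.2)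
  obtain ⟨i, hi⟩ := Finite.exists_min hA.eigenvalues
  obtain ⟨j, hj⟩ := Finite.exists_max hB.eigenvalues
  have hA_ge : algebraMap ℝ _ (hA.eigenvalues i) ≤ A := by
    rw [algebraMap_le_iff_le_spectrum hA.isSelfAdjoint, hA.spectrum_real_eq_range_eigenvalues]
    exact forall_mem_range.2 hi
  have hB_le : B ≤ algebraMap ℝ _ (hB.eigenvalues j) := by
    rw [le_algebraMap_iff_spectrum_le hB.isSelfAdjoint, hB.spectrum_real_eq_range_eigenvalues]
    exact forall_mem_range.2 hj
  refine fun x hx => hI.out (hAI (hA.eigenvalues_mem_spectrum_real i))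
    (hBI (hB.eigenvalues_mem_spectrum_real j)) ⟨?_, ?_⟩
  · exact (algebraMap_le_iff_le_spectrum hC.isSelfAdjoint).1 (hA_ge.trans hAC) x hx
  · exact (le_algebraMap_iff_spectrum_le hC.isSelfAdjoint).1 (hCB.trans hB_le) x hx

theorem matrixMonotoneOn_eval_of_posSemidef_loewnerMatrix {n : ℕ} {q : ℝ[X]} {I : Set ℝ}
    (hI : I.OrdConnected)
    (hq : ∀ d : Fin n → ℝ, (∀ i, d i ∈ I) → (loewnerMatrix q d).PosSemidef) :
    MatrixMonotoneOn n (fun t => q.eval t) I := by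
  intro A B hA hB hAI hBI hAB
  have hderiv : ∀ s ∈ Icc (0 : ℝ) 1, ∃ D : Matrix (Fin n) (Fin n) ℂ, D.PosSemidef ∧
      HasDerivAt (fun s : ℝ => aeval (A + s • (B - A)) q) D s := fun s hs => by
    have hC : (A + s • (B - A)).IsHermitian := hA.add (hAB.smul hs.1).isHermitian
    have hCI := spectrum_add_smul_sub_subset hI hA hB hAI hBI hAB hs
    obtain ⟨D, hD, h⟩ := exists_posSemidef_hasDerivAt_aeval_add_smul hC
      (hq _ fun i => hCI (hC.eigenvalues_mem_spectrum_real i)) hAB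
    rw [← sub_self s] at h
    refine ⟨D, hD, (h.comp_sub_const s s).congr_of_eventuallyEq (.of_forall fun r => ?_)⟩
    change aeval _ q = aeval _ q
    congr 2
    module
  choose! D hD hderiv using hderiv
  refine posSemidef_of_reQuadForm_nonneg (IsSelfAdjoint.sub (cfc_predicate _ B) (cfc_predicate _ A))
    fun v => ?_
  have hψ := le_of_hasDerivAt_nonneg zero_le_one
    (fun s hs => (reQuadForm v).toContinuousLinearMap.hasFDerivAt.comp_hasDerivAt s (hderiv s hs))
    fun s hs => (hD s (Ioo_subset_Icc_self hs)).re_dotProduct_nonneg v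
  rw [cfc_polynomial q A hA.isSelfAdjoint, cfc_polynomial q B hB.isSelfAdjoint, map_sub, sub_nonneg]
  simpa using hψ

lemma eventually_spectrum_diagonal_add_smul_subset {I : Set ℝ} {d : ι → ℝ} (hd : ∀ i, I ∈ 𝓝 (d i))
    (H : Matrix ι ι ℂ) :
    ∀ᶠ s : ℝ in 𝓝 0, spectrum ℝ (diagonal (fun i => (d i : ℂ)) + s • H) ⊆ I := by
  set Δ : Matrix ι ι ℂ := diagonal fun i => (d i : ℂ) with hΔ
  have hcont : Tendsto (fun s : ℝ => Δ + s • H) (𝓝 0) (𝓝 Δ) :=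
    Continuous.tendsto' (by fun_prop) _ _ (by simp)
  have hΔI : I ∈ 𝓝ˢ (spectrum ℝ Δ) := by
    refine mem_nhdsSet_iff_forall.2 fun x hx => ?_
    rw [← spectrum.algebraMap_mem_iff ℂ, hΔ, spectrum_diagonal] at hx
    obtain ⟨i, hi⟩ := hx
    obtain rfl : d i = x := Complex.ofReal_injective hi
    exact hd i
  filter_upwards [hcont (upperHemicontinuous_spectrum ℝ _ Δ I hΔI)] with s hs
  exact subset_of_mem_nhdsSet hs

theorem MatrixConvexOn.posSemidef_secondOrderTerm {n : ℕ} {p : ℝ[X]} {I : Set ℝ}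
    (hp : MatrixConvexOn n (fun t => p.eval t) I) {d : Fin n → ℝ} (hd : ∀ i, I ∈ 𝓝 (d i))
    {H : Matrix (Fin n) (Fin n) ℂ} (hH : H.IsHermitian) : (secondOrderTerm p d H).PosSemidef := by
  obtain ⟨R, hR, hexp⟩ := exists_aeval_diagonal_add_smul_eq p d H
  have hspec := eventually_spectrum_diagonal_add_smul_subset hd H
  have hspec_neg := (continuous_neg.tendsto' (0 : ℝ) 0 neg_zero).eventually hspec
  set Δ : Matrix (Fin n) (Fin n) ℂ := diagonal fun i => (d i : ℂ)
  have hherm : ∀ s : ℝ, (Δ + s • H).IsHermitian := fun s =>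
    (isHermitian_diagonal_of_self_adjoint _ (by ext; simp)).add (hH.smul (.all s))
  have hlim : Tendsto (fun s : ℝ => secondOrderTerm p d H + (s / 2) • (R s - R (-s)))
      (𝓝[≠] 0) (𝓝 (secondOrderTerm p d H)) :=
    (Continuous.tendsto' (by fun_prop) _ _ (by simp)).mono_left nhdsWithin_le_nhds
  refine Matrix.nonneg_iff_posSemidef.1 (ge_of_tendsto hlim ?_)
  filter_upwards [nhdsWithin_le_nhds hspec, nhdsWithin_le_nhds hspec_neg, self_mem_nhdsWithin]
    with s hs hs' hs₀
  have hconv := hp _ _ (hherm s) (hherm (-s)) hs hs' (1 / 2) (by norm_num) (by norm_num)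
  rw [show (1 / 2 : ℝ) • (Δ + s • H) + (1 - 1 / 2 : ℝ) • (Δ + -s • H) = Δ + (0 : ℝ) • H by module,
    cfc_polynomial p _ (hherm _).isSelfAdjoint, cfc_polynomial p _ (hherm _).isSelfAdjoint,
    cfc_polynomial p _ (hherm _).isSelfAdjoint, hexp, hexp, hexp] at hconv
  have hs₂ : (0 : ℝ) ≤ (s ^ 2)⁻¹ := by positivity
  convert! Matrix.nonneg_iff_posSemidef.2 (hconv.smul hs₂) using 1
  rw [eq_inv_smul_iff₀ (pow_ne_zero 2 hs₀)]
  module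

theorem matrixMonotoneOn_neg_inv (n : ℕ) : MatrixMonotoneOn n (fun t => -t⁻¹) (Ioi 0) := by
  intro A B hA hB hA₀ hB₀ hAB
  lift A to (Matrix (Fin n) (Fin n) ℂ)ˣ using
    spectrum.isUnit_of_zero_notMem ℝ fun h => (mem_Ioi.1 (hA₀ h)).false
  lift B to (Matrix (Fin n) (Fin n) ℂ)ˣ using
    spectrum.isUnit_of_zero_notMem ℝ fun h => (mem_Ioi.1 (hB₀ h)).false
  have hA_nonneg : (0 : Matrix (Fin n) (Fin n) ℂ) ≤ A := by
    simpa using (algebraMap_le_iff_le_spectrum (r := (0 : ℝ)) hA.isSelfAdjoint).2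
      fun x hx => (hA₀ hx).le
  rw [cfc_neg, cfc_neg, cfc_inv_id A hA.isSelfAdjoint, cfc_inv_id B hB.isSelfAdjoint,
    ← Matrix.le_iff]
  exact neg_le_neg (CStarAlgebra.inv_le_inv hA_nonneg (Matrix.le_iff.2 hAB))

end LoewnerOrder
end MatrixPolynomials

section MatrixMonotone

variable {n : ℕ} {f g : ℝ → ℝ} {I J : Set ℝ}

lemma MatrixMonotoneOn.mono (hf : MatrixMonotoneOn n f J) (hIJ : I ⊆ J) :
    MatrixMonotoneOn n f I :=
  fun A B hA hB hAI hBI hAB => hf A B hA hB (hAI.trans hIJ) (hBI.trans hIJ) hAB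

lemma MatrixMonotoneOn.congr (hf : MatrixMonotoneOn n f I) (hfg : EqOn f g I) :
    MatrixMonotoneOn n g I := by
  intro A B hA hB hAI hBI hAB
  rw [← cfc_congr (hfg.mono hAI), ← cfc_congr (hfg.mono hBI)]
  exact hf A B hA hB hAI hBI hAB

lemma MatrixMonotoneOn.add (hf : MatrixMonotoneOn n f I) (hg : MatrixMonotoneOn n g I) :
    MatrixMonotoneOn n (fun t => f t + g t) I := by
  intro A B hA hB hAI hBI hAB
  rw [cfc_add A f g (A.finite_real_spectrum.continuousOn f) (A.finite_real_spectrum.continuousOn g),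
    cfc_add B f g (B.finite_real_spectrum.continuousOn f) (B.finite_real_spectrum.continuousOn g),
    add_sub_add_comm]
  exact (hf A B hA hB hAI hBI hAB).add (hg A B hA hB hAI hBI hAB)

lemma MatrixMonotoneOn.const_mul {c : ℝ} (hc : 0 ≤ c) (hf : MatrixMonotoneOn n f I) :
    MatrixMonotoneOn n (fun t => c * f t) I := by
  intro A B hA hB hAI hBI hAB
  rw [cfc_const_mul c f A (A.finite_real_spectrum.continuousOn f),
    cfc_const_mul c f B (B.finite_real_spectrum.continuousOn f), ← smul_sub]
  exact (hf A B hA hB hAI hBI hAB).smul hc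

end MatrixMonotone

section OrderTwo

lemma posSemidef_loewnerMatrix_fin_two {q : ℝ[X]} {d : Fin 2 → ℝ}
    (hq : ∀ x y, 0 ≤ loewnerForm q (d 0) (d 1) x y) : (loewnerMatrix q d).PosSemidef := by
  refine posSemidef_of_reQuadForm_nonneg ?_ fun v => ?_
  · ext i j
    simp [loewnerMatrix, divDiff_comm q (d i)]
  · have hv : reQuadForm v (loewnerMatrix q d) = loewnerForm q (d 0) (d 1) (v 0).re (v 1).re
        + loewnerForm q (d 0) (d 1) (v 0).im (v 1).im := by
      simp only [reQuadForm, LinearMap.coe_mk, AddHom.coe_mk, loewnerMatrix, loewnerForm,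
        dotProduct, mulVec, Fin.sum_univ_two, of_apply, Pi.star_apply, RCLike.star_def,
        divDiff_comm q (d 1) (d 0), Complex.add_re, Complex.add_im, Complex.mul_re, Complex.mul_im,
        Complex.conj_re, Complex.conj_im, Complex.ofReal_re, Complex.ofReal_im]
      ring
    exact hv ▸ add_nonneg (hq _ _) (hq _ _)

theorem matrixMonotoneOn_two_eval_of_hankelForm_nonneg {q : ℝ[X]} {I : Set ℝ}
    (hI : I.OrdConnected) (hq : ∀ t ∈ I, ∀ x y, 0 ≤ hankelForm q 1 t x y) :
    MatrixMonotoneOn 2 (fun t => q.eval t) I :=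
  matrixMonotoneOn_eval_of_posSemidef_loewnerMatrix hI fun _ hd =>
    posSemidef_loewnerMatrix_fin_two
      (loewnerForm_nonneg_of_hankelForm_nonneg hI hq (hd 0) (hd 1))

open Filter Topology

/- Kraus' choice of direction: for `H = (x/ε, y; y, 0)` and the vector `(ε, 1)`, only the terms of
the second-order form passing through the node `a` survive as `ε → 0`. -/
theorem MatrixConvexOn.loewnerForm_divByMonic_X_sub_C_nonneg {p : ℝ[X]} {I : Set ℝ}
    (hp : MatrixConvexOn 2 (fun t => p.eval t) I) {a b : ℝ} (ha : I ∈ 𝓝 a) (hb : I ∈ 𝓝 b)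
    (x y : ℝ) : 0 ≤ loewnerForm (p /ₘ (X - C a)) a b x y := by
  have hlim : Tendsto (fun ε => loewnerForm (p /ₘ (X - C a)) a b x y
        + ε ^ 2 * (divDiff (p /ₘ (X - C b)) a a * y ^ 2))
      (𝓝[≠] 0) (𝓝 (loewnerForm (p /ₘ (X - C a)) a b x y)) :=
    (Continuous.tendsto' (by fun_prop) _ _ (by simp)).mono_left nhdsWithin_le_nhds
  refine ge_of_tendsto hlim ?_
  filter_upwards [self_mem_nhdsWithin] with ε hε
  replace hε : ε ≠ 0 := hε
  have hd : ∀ i, I ∈ 𝓝 (![a, b] i) := Fin.forall_fin_two.2 ⟨ha, hb⟩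
  have hH : (!![((x / ε : ℝ) : ℂ), y; y, 0]).IsHermitian := by
    ext i j
    fin_cases i <;> fin_cases j <;> simp
  have h : 0 ≤ reQuadForm ![(ε : ℂ), 1] (secondOrderTerm p ![a, b] _) :=
    (hp.posSemidef_secondOrderTerm hd hH).re_dotProduct_nonneg _
  refine h.trans_eq ?_
  simp only [reQuadForm, LinearMap.coe_mk, AddHom.coe_mk, secondOrderTerm, loewnerForm, dotProduct,
    mulVec, Fin.sum_univ_two, of_apply, cons_val', cons_val_zero, cons_val_one, cons_val_fin_one,
    Pi.star_apply, RCLike.star_def, Complex.conj_ofReal, map_one, divDiff_comm _ b a,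
    Complex.add_re, Complex.add_im, Complex.mul_re, Complex.mul_im, Complex.ofReal_re,
    Complex.ofReal_im, Complex.one_re, Complex.one_im, Complex.zero_re, Complex.zero_im]
  field_simp
  ring

theorem MatrixConvexOn.hankelForm_nonneg {p : ℝ[X]} {I : Set ℝ}
    (hp : MatrixConvexOn 2 (fun t => p.eval t) I) {t : ℝ} (ht : I ∈ 𝓝 t) (x y : ℝ) :
    0 ≤ hankelForm p 2 t x y := by
  rw [← hankelForm_divByMonic_X_sub_C]
  refine hankelForm_nonneg_of_loewnerForm_nonneg ?_ x y
  filter_upwards [nhdsWithin_le_nhds (eventually_mem_nhds_iff.2 ht)] with b hb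
  exact hp.loewnerForm_divByMonic_X_sub_C_nonneg ht hb

lemma eval_div_eq_eval_divX_add (p : ℝ[X]) {t : ℝ} (ht : t ≠ 0) :
    p.eval t / t = p.divX.eval t + -p.eval 0 * -t⁻¹ := by
  have h := congrArg (eval t) p.divX_mul_X_add
  rw [coeff_zero_eq_eval_zero, eval_add, eval_mul, eval_X, eval_C] at h
  rw [← h]
  field_simp

theorem stmt_12_general (α : EReal) (p : Polynomial ℝ) (h0 : p.eval 0 ≤ 0)
    (hconv : MatrixConvexOn 2 (fun t => p.eval t) {x : ℝ | 0 ≤ x ∧ (x : EReal) < α}) :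
    MatrixMonotoneOn 2 (fun t => p.eval t / t) {x : ℝ | 0 < x ∧ (x : EReal) < α} := by
  set I := {x : ℝ | 0 < x ∧ (x : EReal) < α}
  have hI_ord : I.OrdConnected :=
    ⟨fun x hx y hy z hz => ⟨hx.1.trans_le hz.1, (EReal.coe_le_coe_iff.2 hz.2).trans_lt hy.2⟩⟩
  have hI_open : IsOpen I :=
    isOpen_Ioi.inter (isOpen_Iio.preimage continuous_coe_real_ereal)
  have hp : ∀ t ∈ I, ∀ x y, 0 ≤ hankelForm p 2 t x y := fun t ht =>
    hconv.hankelForm_nonneg (mem_of_superset (hI_open.mem_nhds ht) fun _ hs => ⟨hs.1.le, hs.2⟩)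
  have hdivX : ∀ t ∈ I, ∀ x y, 0 ≤ hankelForm p.divX 1 t x y := fun t ht =>
    hankelForm_divX_nonneg ht.1 fun s hs =>
      hp s ⟨hs.1, (EReal.coe_lt_coe_iff.2 hs.2).trans ht.2⟩
  have hinv : MatrixMonotoneOn 2 (fun t => -p.eval 0 * -t⁻¹) I :=
    ((matrixMonotoneOn_neg_inv 2).mono fun _ ht => ht.1).const_mul (neg_nonneg.2 h0)
  exact ((matrixMonotoneOn_two_eval_of_hankelForm_nonneg hI_ord hdivX).add hinv).congr
    fun t ht => (eval_div_eq_eval_divX_add p ht.1.ne').symm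

end OrderTwo

/-- Proposition 3.6: if `f` is a real polynomial of degree at most 5 with `f(0) ≤ 0` which is
matrix convex of order 2 on `[0,α)`, then `g(t) = f(t)/t` is matrix monotone of order 2 on
`(0,α)`. -/
theorem stmt_12 (α : EReal) (hα : 0 < α) (p : Polynomial ℝ)
    (hdeg : p.natDegree ≤ 5) (h0 : p.eval 0 ≤ 0)
    (hconv : MatrixConvexOn 2 (fun t => p.eval t) {x : ℝ | 0 ≤ x ∧ (x : EReal) < α}) :
    MatrixMonotoneOn 2 (fun t => p.eval t / t) {x : ℝ | 0 < x ∧ (x : EReal) < α} :=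
  stmt_12_general α p h0 hconv
end

section
/- Let 0 < α ≤ ∞ and let f : [0,α) → ℝ be four times continuously differentiable on (0,α), continuous at 0 with f(0) ≤ 0, and suppose that for every t ∈ (0,α) the 2×2 real matrix [[f''(t)/2, f'''(t)/6],[f'''(t)/6, f⁗(t)/24]] is positive semidefinite. Define g(t) = f(t)/t on (0,α). Then for every t ∈ (0,α) the 2×2 real matrix [[g'(t)/2, g''(t)/6],[g''(t)/6, g'''(t)/24]] is positive semidefinite. -/
/-!
Let `K_f` have entries `f^{(i+j)} / (i+j)!` with `1 ≤ i, j ≤ n`, and let `K_g` have entries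
`g^{(i+j-1)} / (i+j)!`, where `g(t) = f(t) / t`. Leibniz' rule for `f = t * g` gives
`(t ^ k * g^{(k-1)})' = t ^ (k-1) * f^{(k)}`, so the matrix with entries `t ^ (i+j) * (K_g)ᵢⱼ` has
derivative `t ^ (i+j-1) * (K_f)ᵢⱼ`, which is positive semidefinite. It is therefore enough that its
limit at `0⁺` is positive semidefinite. That limit is `-f(0⁺) * (-1)^(i+j) / (i+j)`, a nonnegative
multiple of a congruence of the Cauchy matrix `1 / (i+j) = ∫₀^∞ e^{-is} e^{-js} ds`.

Identifying the limit requires `t ^ m * f^{(m)}(t) → 0` at `0⁺` for `0 < m < 2n`. The diagonal of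
`K_f` makes `f, f'', …, f^{(2n-2)}` convex, and convexity controls each derivative by differences of
the preceding one at points comparable to `t`.
-/

open Matrix Set MeasureTheory
open scoped ComplexOrder

open Filter Topology
open scoped Nat

lemma nonneg_of_hasDerivAt_nonneg_of_tendsto {F F' : ℝ → ℝ} {a b l : ℝ}
    (hF : ∀ s ∈ Ioo a b, HasDerivAt F (F' s) s) (hF' : ∀ s ∈ Ioo a b, 0 ≤ F' s)
    (hlim : Tendsto F (𝓝[>] a) (𝓝 l)) (hl : 0 ≤ l) {t : ℝ} (ht : t ∈ Ioo a b) : 0 ≤ F t := by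
  have hmono : MonotoneOn F (Ioo a b) :=
    monotoneOn_of_hasDerivWithinAt_nonneg (convex_Ioo a b)
      (fun s hs => (hF s hs).continuousAt.continuousWithinAt)
      (fun s hs => (hF s (interior_subset hs)).hasDerivWithinAt)
      (fun s hs => hF' s (interior_subset hs))
  refine hl.trans (le_of_tendsto hlim ?_)
  filter_upwards [Ioo_mem_nhdsGT ht.1] with s hs
  exact hmono ⟨hs.1, hs.2.trans ht.2⟩ ht hs.2.le

section PosSemidef

variable {ι : Type*}

lemma posSemidef_mul_mul_apply [Finite ι] {A : Matrix ι ι ℝ} (hA : A.PosSemidef) (d : ι → ℝ) :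
    (of fun i j => d i * d j * A i j).PosSemidef :=
  (posSemidef_vecMulVec_self_star d).hadamard hA

lemma posSemidef_pow_mul_iff {n : ℕ} {A : Matrix (Fin n) (Fin n) ℝ} {s : ℝ} (hs : 0 < s) (c : ℕ) :
    (of fun i j : Fin n => s ^ (i + j + c : ℕ) * A i j).PosSemidef ↔ A.PosSemidef := by
  constructor <;> intro h
  · convert (posSemidef_mul_mul_apply h fun i => (s ^ (i : ℕ))⁻¹).smul (inv_pos.2 (pow_pos hs c)).le
    ext i j
    simp only [Matrix.smul_apply, of_apply, smul_eq_mul]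
    field_simp
    ring
  · convert (posSemidef_mul_mul_apply h fun i => s ^ (i : ℕ)).smul (pow_pos hs c).le using 1
    ext i j
    simp only [Matrix.smul_apply, of_apply, smul_eq_mul]
    ring

lemma posSemidef_inv_add {x : ι → ℝ} (hx : ∀ i, 0 < x i) :
    (of fun i j => (x i + x j)⁻¹).PosSemidef := by
  refine ⟨by ext i j; simp [add_comm], fun v => ?_⟩
  have hneg (i j) : -(x i + x j) < 0 := neg_neg_of_pos (add_pos (hx i) (hx j))
  have hint (i j) : IntegrableOn (fun s => v i * v j * Real.exp (-(x i + x j) * s)) (Ioi 0) :=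
    (integrableOn_exp_mul_Ioi (hneg i j) 0).const_mul _
  calc 0 ≤ ∫ s in Ioi (0 : ℝ), (∑ i ∈ v.support, v i * Real.exp (-x i * s)) ^ 2 :=
        integral_nonneg fun s => sq_nonneg _
    _ = ∫ s in Ioi (0 : ℝ), ∑ i ∈ v.support, ∑ j ∈ v.support,
          v i * v j * Real.exp (-(x i + x j) * s) := by
        congr! 2 with s
        rw [sq, Finset.sum_mul_sum]
        congr! 2 with i _ j _
        rw [neg_add, add_mul, Real.exp_add]
        ring
    _ = ∑ i ∈ v.support, ∑ j ∈ v.support, v i * v j * (x i + x j)⁻¹ := by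
        rw [integral_finsetSum _ fun i _ => integrable_finsetSum _ fun j _ => hint i j]
        congr! 2 with i
        rw [integral_finsetSum _ fun j _ => hint i j]
        congr! 2 with j
        rw [integral_const_mul, integral_exp_mul_Ioi (hneg i j)]
        simp only [mul_zero, Real.exp_zero, neg_div_neg_eq, one_div]
    _ = v.sum fun i vi => v.sum fun j vj => star vi * (x i + x j)⁻¹ * vj := by
        simp only [Finsupp.sum, star_trivial, mul_right_comm]

lemma posSemidef_of_hasDerivAt_posSemidef_of_tendsto {M M' : ℝ → Matrix ι ι ℝ} {L : Matrix ι ι ℝ}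
    {a b : ℝ} (hM : ∀ s ∈ Ioo a b, ∀ i j, HasDerivAt (fun s => M s i j) (M' s i j) s)
    (hM' : ∀ s ∈ Ioo a b, (M' s).PosSemidef)
    (hlim : ∀ i j, Tendsto (fun s => M s i j) (𝓝[>] a) (𝓝 (L i j))) (hL : L.PosSemidef)
    {t : ℝ} (ht : t ∈ Ioo a b) : (M t).PosSemidef := by
  have hsymm (i j) : M t j i ≤ M t i j := by
    refine sub_nonneg.1 (nonneg_of_hasDerivAt_nonneg_of_tendsto
      (fun s hs => (hM s hs i j).sub (hM s hs j i)) (fun s hs => ?_)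
      ((hlim i j).sub (hlim j i)) ?_ ht)
    · exact sub_nonneg.2 ((hM' s hs).isHermitian.apply i j).le
    · exact sub_nonneg.2 (hL.isHermitian.apply i j).le
  refine ⟨?_, fun v => ?_⟩
  · ext i j
    exact (hsymm i j).antisymm (hsymm j i)
  · refine nonneg_of_hasDerivAt_nonneg_of_tendsto
      (F := fun s => v.sum fun i vi => v.sum fun j vj => star vi * M s i j * vj)
      (fun s hs => ?_) (fun s hs => (hM' s hs).2 v) ?_ (hL.2 v) ht
    · exact .fun_sum fun i _ => .fun_sum fun j _ => ((hM s hs i j).const_mul _).mul_const _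
    · exact tendsto_finsetSum _ fun i _ => tendsto_finsetSum _ fun j _ =>
        ((hlim i j).const_mul _).mul_const _

end PosSemidef

section DerivativeDecay

variable {T : ℝ} {h h' p u : ℝ → ℝ} {k : ℕ}

lemma tendsto_pow_mul_comp_const_mul (hu : Tendsto (fun s => s ^ k * u s) (𝓝[>] 0) (𝓝 0))
    {c : ℝ} (hc : 0 < c) : Tendsto (fun s => s ^ k * u (c * s)) (𝓝[>] 0) (𝓝 0) := by
  have hscale : Tendsto (fun s : ℝ => c * s) (𝓝[>] 0) (𝓝[>] 0) := by
    simpa only [mul_zero, id] using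
      TendstoNhdsWithinIoi.const_mul hc (tendsto_id (x := 𝓝[>] (0 : ℝ)))
  have hlim := (hu.comp hscale).const_mul (c ^ k)⁻¹
  rw [mul_zero] at hlim
  refine hlim.congr fun s => ?_
  simp only [Function.comp_apply, mul_pow]
  field_simp

-- Convexity puts `s * h' s` between `2 * (h s - h (s / 2))` and `h (2 * s) - h s`.
lemma tendsto_pow_succ_mul_of_convexOn_of_hasDerivAt (hT : 0 < T) (hconv : ConvexOn ℝ (Ioo 0 T) h)
    (hderiv : ∀ s ∈ Ioo 0 T, HasDerivAt h (h' s) s)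
    (hlim : Tendsto (fun s => s ^ k * h s) (𝓝[>] 0) (𝓝 0)) :
    Tendsto (fun s => s ^ (k + 1) * h' s) (𝓝[>] 0) (𝓝 0) := by
  have hlower := (hlim.sub (tendsto_pow_mul_comp_const_mul hlim one_half_pos)).const_mul 2
  have hupper := (tendsto_pow_mul_comp_const_mul hlim two_pos).sub hlim
  simp only [sub_zero, mul_zero] at hlower hupper
  refine tendsto_of_tendsto_of_tendsto_of_le_of_le' hlower hupper ?_ ?_
  all_goals
    filter_upwards [Ioo_mem_nhdsGT (half_pos hT)] with s ⟨hs0, hsT⟩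
    have hs : s ∈ Ioo 0 T := ⟨hs0, by linarith⟩
  · have hslope := hconv.slope_le_of_hasDerivAt (x := 1 / 2 * s) (y := s)
      ⟨by linarith, by linarith⟩ hs (by linarith) (hderiv s hs)
    rw [slope_def_field, div_le_iff₀ (by linarith)] at hslope
    linear_combination 2 * s ^ k * hslope
  · have hslope := hconv.le_slope_of_hasDerivAt (x := s) (y := 2 * s)
      hs ⟨by linarith, by linarith⟩ (by linarith) (hderiv s hs)
    rw [slope_def_field, le_div_iff₀ (by linarith)] at hslope
    linear_combination s ^ k * hslope

-- The midpoint half of the Hermite–Hadamard inequality.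
lemma two_mul_mul_le_sub_of_convexOn {c r : ℝ} (hr : 0 ≤ r)
    (hconv : ConvexOn ℝ (Icc (c - r) (c + r)) h)
    (hderiv : ∀ s ∈ Icc (c - r) (c + r), HasDerivAt p (h s) s) :
    2 * r * h c ≤ p (c + r) - p (c - r) := by
  have hgap : ∀ d ∈ Icc 0 r, HasDerivAt (fun d => p (c + d) - p (c - d) - 2 * d * h c)
      (h (c + d) + h (c - d) - 2 * h c) d := fun d hd => by
    have hright := (hderiv (c + d) ⟨by linarith [hd.1], by linarith [hd.2]⟩).comp_const_add c d
    have hleft := (hderiv (c - d) ⟨by linarith [hd.2], by linarith [hd.1]⟩).comp_const_sub c d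
    have hlinear := ((hasDerivAt_id' d).const_mul 2).mul_const (h c)
    refine ((hright.sub hleft).sub hlinear).congr_deriv ?_
    ring
  have hmid : ∀ d ∈ Icc 0 r, 0 ≤ h (c + d) + h (c - d) - 2 * h c := fun d hd => by
    have := hconv.2 (x := c + d) (y := c - d) ⟨by linarith [hd.1], by linarith [hd.2]⟩
      ⟨by linarith [hd.2], by linarith [hd.1]⟩ one_half_pos.le one_half_pos.le (add_halves 1)
    simp only [smul_eq_mul] at this
    rw [show 1 / 2 * (c + d) + 1 / 2 * (c - d) = c by ring] at this
    linarith
  have hmono := monotoneOn_of_hasDerivWithinAt_nonneg (convex_Icc 0 r)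
    (fun d hd => (hgap d hd).continuousAt.continuousWithinAt)
    (fun d hd => (hgap d (interior_subset hd)).hasDerivWithinAt)
    (fun d hd => hmid d (interior_subset hd))
  have := hmono ⟨le_rfl, hr⟩ ⟨hr, le_rfl⟩ hr
  simp only [add_zero, sub_zero, sub_self, mul_zero, zero_mul] at this
  linarith

lemma tendsto_pow_succ_mul_of_convexOn_of_nonneg (hT : 0 < T) (hconv : ConvexOn ℝ (Ioo 0 T) h)
    (hnonneg : ∀ s ∈ Ioo 0 T, 0 ≤ h s) (hderiv : ∀ s ∈ Ioo 0 T, HasDerivAt p (h s) s)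
    (hlim : Tendsto (fun s => s ^ k * p s) (𝓝[>] 0) (𝓝 0)) :
    Tendsto (fun s => s ^ (k + 1) * h s) (𝓝[>] 0) (𝓝 0) := by
  have hupper := (tendsto_pow_mul_comp_const_mul hlim (c := 3 / 2) (by norm_num)).sub
    (tendsto_pow_mul_comp_const_mul hlim one_half_pos)
  rw [sub_zero] at hupper
  refine tendsto_of_tendsto_of_tendsto_of_le_of_le' tendsto_const_nhds hupper ?_ ?_
  all_goals filter_upwards [Ioo_mem_nhdsGT (half_pos hT)] with s ⟨hs0, hsT⟩
  · exact mul_nonneg (by positivity) (hnonneg s ⟨hs0, by linarith⟩)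
  · have hsub : Icc (s - s / 2) (s + s / 2) ⊆ Ioo 0 T := fun x hx =>
      ⟨by linarith [hx.1], by linarith [hx.2]⟩
    have hmid := two_mul_mul_le_sub_of_convexOn (half_pos hs0).le
      (hconv.subset hsub (convex_Icc _ _)) fun x hx => hderiv x (hsub hx)
    rw [show s + s / 2 = 3 / 2 * s by ring, show s - s / 2 = 1 / 2 * s by ring] at hmid
    linear_combination s ^ k * hmid

lemma hasDerivAt_iteratedDeriv {𝕜 F : Type*} [NontriviallyNormedField 𝕜] [NormedAddCommGroup F]
    [NormedSpace 𝕜 F] {f : 𝕜 → F} {x : 𝕜} {n m : ℕ} (hf : ContDiffAt 𝕜 n f x) (hm : m < n) :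
    HasDerivAt (iteratedDeriv m f) (iteratedDeriv (m + 1) f x) x := by
  have hdiff := hf.contDiffWithinAt (s := univ).differentiableWithinAt_iteratedDerivWithin (m := m)
    (by exact_mod_cast hm) (by simp [uniqueDiffOn_univ])
  rw [iteratedDerivWithin_univ, differentiableWithinAt_univ] at hdiff
  rw [iteratedDeriv_succ]
  exact hdiff.hasDerivAt

variable {f : ℝ → ℝ} {n : ℕ} {l : ℝ}

lemma convexOn_iteratedDeriv {D : Set ℝ} {m : ℕ} (hD : Convex ℝ D)
    (hf : ∀ x ∈ D, ContDiffAt ℝ (m + 2 : ℕ) f x) (hpos : ∀ x ∈ D, 0 ≤ iteratedDeriv (m + 2) f x) :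
    ConvexOn ℝ D (iteratedDeriv m f) := by
  have hderiv (j : ℕ) (hj : j < m + 2) : DifferentiableOn ℝ (iteratedDeriv j f) D := fun x hx =>
    (hasDerivAt_iteratedDeriv (hf x hx) hj).differentiableAt.differentiableWithinAt
  refine convexOn_of_deriv2_nonneg' hD (hderiv m (by lia)) ?_ ?_
  · simpa only [iteratedDeriv_succ] using hderiv (m + 1) (by lia)
  · simpa only [Function.iterate_succ, Function.iterate_zero, Function.comp_apply, id,
      iteratedDeriv_succ] using hpos

lemma tendsto_pow_mul_iteratedDeriv_of_tendsto_zero (hT : 0 < T)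
    (hf : ∀ x ∈ Ioo 0 T, ContDiffAt ℝ (2 * n : ℕ) f x)
    (hpos : ∀ k < n, ∀ x ∈ Ioo 0 T, 0 ≤ iteratedDeriv (2 * k + 2) f x)
    (hlim : Tendsto f (𝓝[>] 0) (𝓝 0)) {m : ℕ} (hm : m < 2 * n) :
    Tendsto (fun s => s ^ m * iteratedDeriv m f s) (𝓝[>] 0) (𝓝 0) := by
  have hderiv (m : ℕ) (hm : m < 2 * n) : ∀ x ∈ Ioo 0 T,
      HasDerivAt (iteratedDeriv m f) (iteratedDeriv (m + 1) f x) x :=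
    fun x hx => hasDerivAt_iteratedDeriv (hf x hx) hm
  have hconv {k : ℕ} (hk : k < n) : ConvexOn ℝ (Ioo 0 T) (iteratedDeriv (2 * k) f) :=
    convexOn_iteratedDeriv (convex_Ioo 0 T)
      (fun x hx => (hf x hx).of_le (by exact_mod_cast (by lia : 2 * k + 2 ≤ 2 * n))) (hpos k hk)
  induction m with
  | zero => simpa using hlim
  | succ m ih =>
    obtain ⟨k, rfl | rfl⟩ := m.even_or_odd'
    · exact tendsto_pow_succ_mul_of_convexOn_of_hasDerivAt hT (hconv (by lia))
        (hderiv (2 * k) (by lia)) (ih (by lia))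
    · exact tendsto_pow_succ_mul_of_convexOn_of_nonneg hT (hconv (k := k + 1) (by lia))
        (hpos k (by lia)) (hderiv (2 * k + 1) (by lia)) (ih (by lia))

lemma tendsto_pow_mul_iteratedDeriv (hT : 0 < T) (hf : ∀ x ∈ Ioo 0 T, ContDiffAt ℝ (2 * n : ℕ) f x)
    (hpos : ∀ k < n, ∀ x ∈ Ioo 0 T, 0 ≤ iteratedDeriv (2 * k + 2) f x)
    (hlim : Tendsto f (𝓝[>] 0) (𝓝 l)) {m : ℕ} (hm0 : 0 < m) (hm : m < 2 * n) :
    Tendsto (fun s => s ^ m * iteratedDeriv m f s) (𝓝[>] 0) (𝓝 0) := by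
  have hshift {j : ℕ} (hj : 0 < j) (x : ℝ) :
      iteratedDeriv j (fun z => -l + f z) x = iteratedDeriv j f x := iteratedDeriv_const_add hj _
  simpa only [hshift hm0] using tendsto_pow_mul_iteratedDeriv_of_tendsto_zero hT
    (fun x hx => contDiffAt_const.add (hf x hx))
    (fun k hk x hx => (hpos k hk x hx).trans_eq (hshift (by lia) x).symm)
    (by simpa using hlim.const_add (-l)) hm

end DerivativeDecay

section Quotient

lemma iteratedDeriv_succ_id_mul {𝕜 : Type*} [NontriviallyNormedField 𝕜] {g : 𝕜 → 𝕜} {x : 𝕜} {k : ℕ}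
    (hg : ContDiffAt 𝕜 (k + 1 : ℕ) g x) :
    iteratedDeriv (k + 1) (fun y => y * g y) x =
      x * iteratedDeriv (k + 1) g x + (k + 1) * iteratedDeriv k g x := by
  rw [iteratedDeriv_fun_mul contDiffAt_fun_id hg, Finset.sum_range_succ', Finset.sum_range_succ']
  simp [iteratedDeriv_fun_id, add_comm]

variable {𝕜 : Type*} [NontriviallyNormedField 𝕜] {f : 𝕜 → 𝕜} {x : 𝕜} {k : ℕ}

lemma iteratedDeriv_succ_eq_mul_div_id_add (hx : x ≠ 0) (hf : ContDiffAt 𝕜 (k + 1 : ℕ) f x) :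
    iteratedDeriv (k + 1) f x = x * iteratedDeriv (k + 1) (fun y => f y / y) x +
      (k + 1) * iteratedDeriv k (fun y => f y / y) x := by
  have hmul : f =ᶠ[𝓝 x] fun y => y * (f y / y) := by
    filter_upwards [isOpen_ne.mem_nhds hx] with y hy using (mul_div_cancel₀ (f y) hy).symm
  rw [hmul.iteratedDeriv_eq, iteratedDeriv_succ_id_mul (hf.fun_div contDiffAt_fun_id hx)]

lemma hasDerivAt_pow_mul_iteratedDeriv_div_id (hx : x ≠ 0) (hf : ContDiffAt 𝕜 (k + 1 : ℕ) f x) :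
    HasDerivAt (fun y => y ^ (k + 1) * iteratedDeriv k (fun y => f y / y) y)
      (x ^ k * iteratedDeriv (k + 1) f x) x := by
  refine ((hasDerivAt_pow (k + 1) x).mul
    (hasDerivAt_iteratedDeriv (hf.fun_div contDiffAt_fun_id hx) k.lt_succ_self)).congr_deriv ?_
  rw [iteratedDeriv_succ_eq_mul_div_id_add hx hf]
  push_cast
  ring

end Quotient

lemma tendsto_pow_succ_mul_iteratedDeriv_div_id {f : ℝ → ℝ} {l : ℝ} {k : ℕ}
    (hf : ∀ᶠ x in 𝓝[>] 0, ContDiffAt ℝ k f x) (hlim : Tendsto f (𝓝[>] 0) (𝓝 l))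
    (hdecay : ∀ m, 0 < m → m ≤ k →
      Tendsto (fun s => s ^ m * iteratedDeriv m f s) (𝓝[>] 0) (𝓝 0)) :
    Tendsto (fun s => s ^ (k + 1) * iteratedDeriv k (fun x => f x / x) s) (𝓝[>] 0)
      (𝓝 ((-1) ^ k * k ! * l)) := by
  induction k with
  | zero =>
    refine (hlim.congr' ?_).trans_eq (by simp)
    filter_upwards [self_mem_nhdsWithin] with s (hs : 0 < s)
    simp [mul_div_cancel₀, hs.ne']
  | succ k ih =>
    have hprev := ih (hf.mono fun x hx => hx.of_le (by exact_mod_cast k.le_succ))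
      fun m hm0 hm => hdecay m hm0 (hm.trans k.le_succ)
    have hnext := (hdecay (k + 1) k.succ_pos le_rfl).sub (hprev.const_mul (k + 1 : ℝ))
    rw [show (-1) ^ (k + 1) * (k + 1)! * l = 0 - (k + 1 : ℝ) * ((-1) ^ k * k ! * l) by
      push_cast [Nat.factorial_succ]; ring]
    refine hnext.congr' ?_
    filter_upwards [hf, self_mem_nhdsWithin] with s hfs (hs : 0 < s)
    rw [iteratedDeriv_succ_eq_mul_div_id_add hs.ne' hfs]
    ring

section Kraus

/-- With `r = 2`, the Kraus matrix of order `n` of `f` at `t`, whose entry in row `i` and column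
`j` (counted from `1`) is `f^{(i+j)}(t) / (i+j)!`. The shift `r` lowers the orders of the
derivatives but not the factorials, so `r = 1` gives the Kraus matrix of an antiderivative
of `f`. -/
noncomputable def krausMatrix (n r : ℕ) (f : ℝ → ℝ) (t : ℝ) : Matrix (Fin n) (Fin n) ℝ :=
  of fun i j => iteratedDeriv (i + j + r) f t / ((i + j + 2)! : ℕ)

lemma krausMatrix_two (r : ℕ) (f : ℝ → ℝ) (t : ℝ) :
    krausMatrix 2 r f t =
      !![iteratedDeriv r f t / 2, iteratedDeriv (r + 1) f t / 6;
         iteratedDeriv (r + 1) f t / 6, iteratedDeriv (r + 2) f t / 24] := by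
  ext i j
  fin_cases i <;> fin_cases j <;> simp [krausMatrix, Nat.factorial, add_comm] <;> norm_num

variable {n : ℕ} {f : ℝ → ℝ} {t T l : ℝ}

lemma iteratedDeriv_nonneg_of_posSemidef_krausMatrix {r k : ℕ}
    (hK : (krausMatrix n r f t).PosSemidef) (hk : k < n) : 0 ≤ iteratedDeriv (2 * k + r) f t := by
  have hdiag := hK.diag_nonneg (i := ⟨k, hk⟩)
  rw [krausMatrix, of_apply, ← two_mul] at hdiag
  simpa only [zero_mul] using (le_div_iff₀ (by positivity)).1 hdiag

lemma hasDerivAt_pow_mul_krausMatrix_div_id (ht : t ≠ 0) (hf : ContDiffAt ℝ (2 * n : ℕ) f t)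
    (i j : Fin n) :
    HasDerivAt (fun s => s ^ (i + j + 2 : ℕ) * krausMatrix n 1 (fun x => f x / x) s i j)
      (t ^ (i + j + 1 : ℕ) * krausMatrix n 2 f t i j) t := by
  simpa only [krausMatrix, of_apply, mul_div_assoc] using
    (hasDerivAt_pow_mul_iteratedDeriv_div_id (k := i + j + 1) ht
      (hf.of_le (by exact_mod_cast (by lia : (i + j + 1 + 1 : ℕ) ≤ 2 * n)))).div_const _

lemma tendsto_pow_mul_krausMatrix_div_id (hT : 0 < T)
    (hf : ∀ x ∈ Ioo 0 T, ContDiffAt ℝ (2 * n : ℕ) f x) (hlim : Tendsto f (𝓝[>] 0) (𝓝 l))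
    (hK : ∀ x ∈ Ioo 0 T, (krausMatrix n 2 f x).PosSemidef) (i j : Fin n) :
    Tendsto (fun s => s ^ (i + j + 2 : ℕ) * krausMatrix n 1 (fun x => f x / x) s i j) (𝓝[>] 0)
      (𝓝 (-l * ((-1) ^ (i : ℕ) * (-1) ^ (j : ℕ) * ((i + 1 : ℝ) + (j + 1))⁻¹))) := by
  have hlt : (i + j + 1 : ℕ) < 2 * n := by lia
  have hentry := (tendsto_pow_succ_mul_iteratedDeriv_div_id (k := i + j + 1)
    (eventually_of_mem (Ioo_mem_nhdsGT hT) fun x hx => (hf x hx).of_le (by exact_mod_cast hlt.le))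
    hlim fun m hm0 hm => tendsto_pow_mul_iteratedDeriv hT hf
      (fun k hk x hx => iteratedDeriv_nonneg_of_posSemidef_krausMatrix (hK x hx) hk)
      hlim hm0 (hm.trans_lt hlt)).div_const ((i + j + 2)! : ℕ)
  simp only [krausMatrix, of_apply, ← mul_div_assoc]
  convert hentry using 2
  push_cast [Nat.factorial_succ (i + j + 1)]
  field_simp
  ring

theorem posSemidef_krausMatrix_div_id (hf : ∀ x ∈ Ioo 0 T, ContDiffAt ℝ (2 * n : ℕ) f x)
    (hlim : Tendsto f (𝓝[>] 0) (𝓝 l)) (hl : l ≤ 0)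
    (hK : ∀ x ∈ Ioo 0 T, (krausMatrix n 2 f x).PosSemidef) (ht : t ∈ Ioo 0 T) :
    (krausMatrix n 1 (fun x => f x / x) t).PosSemidef := by
  have hlimit : (-l • of fun i j : Fin n =>
      (-1) ^ (i : ℕ) * (-1) ^ (j : ℕ) * ((i + 1 : ℝ) + (j + 1))⁻¹).PosSemidef :=
    (posSemidef_mul_mul_apply (posSemidef_inv_add fun i : Fin n => by positivity)
      fun i => (-1) ^ (i : ℕ)).smul (neg_nonneg.2 hl)
  rw [← posSemidef_pow_mul_iff ht.1 2]
  exact posSemidef_of_hasDerivAt_posSemidef_of_tendsto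
    (fun s hs => hasDerivAt_pow_mul_krausMatrix_div_id hs.1.ne' (hf s hs))
    (fun s hs => (posSemidef_pow_mul_iff hs.1 1).2 (hK s hs))
    (tendsto_pow_mul_krausMatrix_div_id (ht.1.trans ht.2) hf hlim hK) hlimit ht

end Kraus

theorem stmt_15_general (n : ℕ) (α : EReal) (f : ℝ → ℝ) (l : ℝ)
    (hf : ContDiffOn ℝ (2 * n : ℕ) f {x : ℝ | 0 < x ∧ (x : EReal) < α})
    (hlim : Tendsto f (𝓝[>] 0) (𝓝 l)) (hl : l ≤ 0)
    (hK : ∀ t : ℝ, 0 < t → (t : EReal) < α → (krausMatrix n 2 f t).PosSemidef) :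
    ∀ t : ℝ, 0 < t → (t : EReal) < α →
      (krausMatrix n 1 (fun x => f x / x) t).PosSemidef := by
  intro t ht0 htα
  obtain ⟨T, htT, hTα⟩ := EReal.lt_iff_exists_real_btwn.1 htα
  have hlt : ∀ x ∈ Ioo 0 T, (x : EReal) < α := fun x hx =>
    (EReal.coe_lt_coe_iff.2 hx.2).trans hTα
  exact posSemidef_krausMatrix_div_id
    (fun x hx => hf.contDiffAt <| mem_of_superset (isOpen_Ioo.mem_nhds hx) fun y hy =>
      ⟨hy.1, hlt y hy⟩)
    hlim hl (fun x hx => hK x hx.1 (hlt x hx)) ⟨ht0, EReal.coe_lt_coe_iff.1 htT⟩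

/-- The analytic core of the proof of Proposition 3.7: if `f` is `C⁴` on `(0,α)`, continuous at
`0` from the right with `f(0) ≤ 0`, and the Kraus matrix of `f` is positive semidefinite on
`(0,α)`, then the Kraus matrix of `g(t) = f(t)/t` is positive semidefinite on `(0,α)`. -/
theorem stmt_15 (α : EReal) (hα : 0 < α) (f : ℝ → ℝ)
    (hf : ContDiffOn ℝ 4 f {x : ℝ | 0 < x ∧ (x : EReal) < α})
    (hf0c : ContinuousWithinAt f (Ici (0:ℝ)) 0) (hf0 : f 0 ≤ 0)
    (hK : ∀ t : ℝ, 0 < t → (t : EReal) < α →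
      (!![iteratedDeriv 2 f t / 2, iteratedDeriv 3 f t / 6;
          iteratedDeriv 3 f t / 6, iteratedDeriv 4 f t / 24]).PosSemidef) :
    ∀ t : ℝ, 0 < t → (t : EReal) < α →
      (!![deriv (fun x => f x / x) t / 2, iteratedDeriv 2 (fun x => f x / x) t / 6;
          iteratedDeriv 2 (fun x => f x / x) t / 6,
          iteratedDeriv 3 (fun x => f x / x) t / 24]).PosSemidef := by
  simpa only [krausMatrix_two, iteratedDeriv_one] using stmt_15_general 2 α f (f 0) hf
    (hf0c.mono Ioi_subset_Ici_self) hf0 (by simpa only [krausMatrix_two] using hK)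
end
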